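/- Let $d = 3$ and let $Y_1, \dots, Y_N$ be independent Markovian flight processes in $\mathbb{R}^d$ started at the origin with deterministic initial unit velocities $v_1, \dots, v_N$, i.e., each $Y_j$ moves with unit speed along straight segments whose lengths are i.i.d. EXP(1) and whose directions after the first are i.i.d. uniform on $S^{d-1}$. Let $w := 2 \min_{i < j} \arcsin\sqrt{(1 - v_i \cdot v_j)/2}$ be the minimal angle between initial velocities, and for $r \in (0,1]$, $T \ge 1$ with $rT \le 1$ let $\sigma$ be the first time one of the trajectories comes within distance $2r$ of a previous scattering point of any of the trajectories (of itself at a non-adjacent scattering, or of another trajectory). Then there is a universal constant $C < \infty$ with $\mathbb{P}(\sigma < T) \le C r (N T + N^2 w^{-1})$. -/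

import Mathlib

open MeasureTheory ProbabilityTheory Real
open scoped ENNReal InnerProductSpace

/-- Time of the `k`-th scattering of a flight process with flight lengths `ξ`. -/
noncomputable def flightTheta {Ω : Type*} (ξ : ℕ → Ω → ℝ) (k : ℕ) (ω : Ω) : ℝ :=
  ∑ l ∈ Finset.range k, ξ l ω

/-- Position at the `k`-th scattering of the flight process with flight lengths `ξ` and
flight velocities `U`. -/
noncomputable def flightPos {Ω E : Type*} [AddCommMonoid E] [Module ℝ E]
    (ξ : ℕ → Ω → ℝ) (U : ℕ → Ω → E) (k : ℕ) (ω : Ω) : E :=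
  ∑ l ∈ Finset.range k, ξ l ω • U l ω

/-- Position of the flight process at (continuous) time `t`. -/
noncomputable def flightTraj {Ω E : Type*} [AddCommMonoid E] [Module ℝ E]
    (ξ : ℕ → Ω → ℝ) (U : ℕ → Ω → E) (t : ℝ) (ω : Ω) : E :=
  flightPos ξ U (sSup {k : ℕ | flightTheta ξ k ω ≤ t}) ω +
    (t - flightTheta ξ (sSup {k : ℕ | flightTheta ξ k ω ≤ t}) ω) •
      U (sSup {k : ℕ | flightTheta ξ k ω ≤ t}) ω

/-- First time one of `N` flight trajectories comes within distance `2r` of a previous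
scattering point of any of the trajectories (of itself at a non-adjacent scattering, or of
another trajectory). -/
noncomputable def mismatchTime {Ω E : Type*} [NormedAddCommGroup E] [NormedSpace ℝ E]
    (N : ℕ) (ξ : Fin N → ℕ → Ω → ℝ) (U : Fin N → ℕ → Ω → E) (r : ℝ) (ω : Ω) : ℝ :=
  sInf {t : ℝ | 0 < t ∧ ∃ i j : Fin N, ∃ k : ℕ, 1 ≤ k ∧
    flightTheta (ξ j) k ω ≤ t ∧
    ∃ s : ℝ, 0 ≤ s ∧ s ≤ t ∧
      ‖flightTraj (ξ i) (U i) s ω - flightPos (ξ j) (U j) k ω‖ < 2 * r ∧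
      (i = j → (s < flightTheta (ξ j) (k - 1) ω ∨ flightTheta (ξ j) (k + 1) ω < s))}

/-!
Put `ρ = 2 * r`. A mismatch before time `T` forces some flight of one trajectory to pass within `ρ`
of a scattering point, of the same or of another trajectory. Once a flight is that close, the
memoryless property makes it end within a further distance `ρ / 2` with probability at least
`ρ / 4`, so the probability of the encounter is at most `4 / ρ` times the probability that the
two scattering points at the end of the flight and at the encounter are within `2 * ρ` of each
other.

For the latter, let `ε = 2 * ρ`. The end point of two successive flights in given directions has a
density in their plane of at most the reciprocal of the sine of the angle between the directions,
which is integrable if one of them is uniform, by Archimedes' hat-box theorem; hence a displacement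
over two or more flights lies in a ball of radius `ε` with probability `O(ε ^ 2)`. The
characteristic function of a flight in a uniform direction is `arctan ‖t‖ / ‖t‖`; its powers of
exponent at least four have a finite sum of integrals, so Fourier inversion gives `O(ε ^ 3)` for the
total over all longer displacements. The expected number of scatterings before time `T` is `O(T)`.
Summing, the self-interference of one trajectory has probability `O(ρ⁻¹ * ε ^ 2 * T) = O(r * T)`,
while two different trajectories interfere with probability
`O(ρ⁻¹ * (ε ^ 2 / w + ε ^ 2 + ε ^ 3 * T))`, which is `O(r / w)`: the angle `w` enters only through
the end points of the two initial flights. A union bound over trajectories and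
pairs of trajectories concludes.
-/

section ExponentialLaw

variable {r : ℝ}

lemma expMeasure_eq_withDensity (r : ℝ) :
    expMeasure r =
      (volume.restrict (Set.Ici 0)).withDensity fun x ↦ ENNReal.ofReal (r * exp (-(r * x))) := by
  rw [← withDensity_indicator measurableSet_Ici]
  change volume.withDensity (exponentialPDF r) = _
  congr 1 with x
  simp [exponentialPDF_eq, Set.indicator_apply, apply_ite ENNReal.ofReal]

lemma expMeasure_le_smul_volume (hr : 0 < r) : expMeasure r ≤ ENNReal.ofReal r • volume := by
  rw [expMeasure_eq_withDensity]
  calc (volume.restrict (Set.Ici 0)).withDensity (fun x ↦ ENNReal.ofReal (r * exp (-(r * x))))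
      ≤ (volume.restrict (Set.Ici 0)).withDensity fun _ ↦ ENNReal.ofReal r := by
        refine withDensity_mono ((ae_restrict_iff' measurableSet_Ici).2 (.of_forall ?_))
        refine fun x (hx : 0 ≤ x) ↦ ENNReal.ofReal_le_ofReal (mul_le_of_le_one_right hr.le ?_)
        exact exp_le_one_iff.2 (neg_nonpos.2 (mul_nonneg hr.le hx))
    _ = ENNReal.ofReal r • volume.restrict (Set.Ici 0) := withDensity_const _
    _ ≤ ENNReal.ofReal r • volume := by gcongr; exact Measure.restrict_le_self

lemma expMeasure_Iic (hr : 0 < r) {t : ℝ} (ht : 0 ≤ t) :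
    expMeasure r (Set.Iic t) = ENNReal.ofReal (1 - exp (-(r * t))) := by
  have := isProbabilityMeasure_expMeasure hr
  rw [← ofReal_cdf, cdf_expMeasure_eq hr, if_pos ht]

lemma expMeasure_Iic_zero (hr : 0 < r) : expMeasure r (Set.Iic 0) = 0 := by
  simp [expMeasure_Iic hr le_rfl]

lemma expMeasure_ae_pos (hr : 0 < r) : ∀ᵐ x ∂expMeasure r, 0 < x := by
  simpa [ae_iff, Set.Iic_def] using expMeasure_Iic_zero hr

lemma eq_expMeasure_of_Iic (hr : 0 < r) {μ : Measure ℝ} [IsFiniteMeasure μ]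
    (h : ∀ t : ℝ, 0 ≤ t → μ (Set.Iic t) = ENNReal.ofReal (1 - exp (-(r * t)))) :
    μ = expMeasure r := by
  refine Measure.ext_of_Iic _ _ fun a ↦ ?_
  rcases le_or_gt 0 a with ha | ha
  · rw [h a ha, expMeasure_Iic hr ha]
  · have hμ : μ (Set.Iic 0) = 0 := by simp [h 0 le_rfl]
    rw [measure_mono_null (Set.Iic_subset_Iic.2 ha.le) hμ,
      measure_mono_null (Set.Iic_subset_Iic.2 ha.le) (expMeasure_Iic_zero hr)]

lemma map_eq_expMeasure_of_measure_le (hr : 0 < r) {Ω : Type*} [MeasurableSpace Ω]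
    {μ : Measure Ω} [IsFiniteMeasure μ] {X : Ω → ℝ} (hX : Measurable X)
    (h : ∀ t : ℝ, 0 ≤ t → μ {ω | X ω ≤ t} = ENNReal.ofReal (1 - exp (-(r * t)))) :
    μ.map X = expMeasure r :=
  eq_expMeasure_of_Iic hr fun t ht ↦ (Measure.map_apply hX measurableSet_Iic).trans (h t ht)

lemma expMeasure_Ioc (hr : 0 < r) {a b : ℝ} (ha : 0 ≤ a) (hab : a ≤ b) :
    expMeasure r (Set.Ioc a b) = ENNReal.ofReal (exp (-(r * a)) - exp (-(r * b))) := by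
  have := isProbabilityMeasure_expMeasure hr
  have hle : exp (-(r * a)) ≤ 1 := exp_le_one_iff.2 (neg_nonpos.2 (mul_nonneg hr.le ha))
  rw [← Set.Iic_sdiff_Iic, measure_sdiff (Set.Iic_subset_Iic.2 hab) nullMeasurableSet_Iic
    (measure_ne_top _ _), expMeasure_Iic hr ha, expMeasure_Iic hr (ha.trans hab),
    ← ENNReal.ofReal_sub _ (sub_nonneg.2 hle)]
  congr 1
  ring

lemma expMeasure_Ici (hr : 0 < r) {a : ℝ} (ha : 0 ≤ a) :
    expMeasure r (Set.Ici a) = ENNReal.ofReal (exp (-(r * a))) := by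
  have := isProbabilityMeasure_expMeasure hr
  have hatom : expMeasure r {a} = 0 :=
    le_antisymm ((expMeasure_le_smul_volume hr _).trans (by simp)) zero_le
  have hle : exp (-(r * a)) ≤ 1 := exp_le_one_iff.2 (neg_nonpos.2 (mul_nonneg hr.le ha))
  rw [← measure_sdiff_null hatom, Set.Ici_sdiff_left, ← Set.compl_Iic,
    prob_compl_eq_one_sub measurableSet_Iic, expMeasure_Iic hr ha, ← ENNReal.ofReal_one,
    ← ENNReal.ofReal_sub _ (sub_nonneg.2 hle), sub_sub_cancel]

lemma charFun_expMeasure (hr : 0 < r) (t : ℝ) :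
    charFun (expMeasure r) t = r / (r - t * Complex.I) := by
  rw [charFun_apply_real, expMeasure_eq_withDensity,
    integral_withDensity_eq_integral_toReal_smul (by fun_prop) (by simp)]
  have hexp (x : ℝ) : (ENNReal.ofReal (r * exp (-(r * x)))).toReal • Complex.exp (t * x * Complex.I)
      = r * Complex.exp ((-r + t * Complex.I) * x) := by
    rw [ENNReal.toReal_ofReal (by positivity), Complex.real_smul, Complex.ofReal_mul,
      Complex.ofReal_exp, mul_assoc, ← Complex.exp_add]
    congr 2
    push_cast
    ring
  simp_rw [hexp]
  rw [integral_const_mul, integral_Ici_eq_integral_Ioi, integral_exp_mul_complex_Ioi (by simpa)]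
  simp only [Complex.ofReal_zero, mul_zero, Complex.exp_zero]
  rw [← neg_div_neg_eq, neg_neg, mul_one_div]
  congr 1
  ring

lemma lintegral_exp_neg_mul_expMeasure (hr : 0 < r) {l : ℝ} (hl : 0 < l) :
    ∫⁻ x, ENNReal.ofReal (exp (-(l * x))) ∂expMeasure r = ENNReal.ofReal (r / (r + l)) := by
  rw [expMeasure_eq_withDensity,
    lintegral_withDensity_eq_lintegral_mul _ (by fun_prop) (by fun_prop)]
  have hexp (x : ℝ) : ENNReal.ofReal (r * exp (-(r * x))) * ENNReal.ofReal (exp (-(l * x)))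
      = ENNReal.ofReal (r * exp (-(r + l) * x)) := by
    rw [← ENNReal.ofReal_mul (by positivity), mul_assoc, ← exp_add]
    ring_nf
  simp only [Pi.mul_apply, hexp]
  rw [← ofReal_integral_eq_lintegral_ofReal, integral_const_mul, integral_Ici_eq_integral_Ioi,
    integral_exp_mul_Ioi (by linarith)]
  · rw [mul_zero, exp_zero, neg_div_neg_eq, mul_one_div]
  · exact ((integrableOn_Ici_iff_integrableOn_Ioi (μ := volume)).2
      (integrableOn_exp_mul_Ioi (by linarith) 0)).const_mul r
  · exact .of_forall fun x ↦ by positivity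

end ExponentialLaw

section TwoSegments

variable {E : Type*} [NormedAddCommGroup E] [InnerProductSpace ℝ E]
  {μ ν : Measure ℝ} [SFinite ν]

lemma prod_le_of_forall_mem_strip (hμ : μ ≤ volume) (hν : ν ≤ volume) {B : Set (ℝ × ℝ)}
    (hB : MeasurableSet B) {c A ε : ℝ} {f : ℝ → ℝ}
    (hstrip : ∀ p ∈ B, |p.1 - c| ≤ A ∧ |p.2 - f p.1| ≤ ε) :
    (μ.prod ν) B ≤ ENNReal.ofReal (2 * A) * ENNReal.ofReal (2 * ε) := by
  have hslice (a : ℝ) : ν (Prod.mk a ⁻¹' B) ≤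
      (Metric.closedBall c A).indicator (fun _ ↦ ENNReal.ofReal (2 * ε)) a := by
    by_cases ha : a ∈ Metric.closedBall c A
    · rw [Set.indicator_of_mem ha, ← Real.volume_closedBall (f a)]
      exact (hν _).trans (measure_mono fun b hb ↦ (hstrip _ hb).2)
    · have hempty : Prod.mk a ⁻¹' B = ∅ :=
        Set.eq_empty_of_forall_notMem fun b hb ↦ ha (hstrip _ hb).1
      simp [hempty]
  calc (μ.prod ν) B = ∫⁻ a, ν (Prod.mk a ⁻¹' B) ∂μ := Measure.prod_apply hB
    _ ≤ ∫⁻ a, (Metric.closedBall c A).indicator (fun _ ↦ ENNReal.ofReal (2 * ε)) a ∂μ :=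
        lintegral_mono hslice
    _ = ENNReal.ofReal (2 * ε) * μ (Metric.closedBall c A) :=
        lintegral_indicator_const Metric.isClosed_closedBall.measurableSet _
    _ ≤ ENNReal.ofReal (2 * ε) * volume (Metric.closedBall c A) := by gcongr
    _ = ENNReal.ofReal (2 * A) * ENNReal.ofReal (2 * ε) := by rw [Real.volume_closedBall, mul_comm]

lemma norm_sub_inner_smul_sq {u v : E} (hu : ‖u‖ = 1) (hv : ‖v‖ = 1) :
    ‖u - ⟪u, v⟫_ℝ • v‖ ^ 2 = 1 - ⟪u, v⟫_ℝ ^ 2 := by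
  rw [norm_sub_sq_real, inner_smul_right, norm_smul, hu, hv, norm_eq_abs, mul_one, sq_abs]
  ring

/-
The inner products of `a • u + b • v - y` with `n = u - ⟪u, v⟫ • v` and with `v` confine
`a` to an interval of length `2 * ε / ‖n‖` and then `b` to one of length `2 * ε`.
-/
lemma prod_smul_add_smul_mem_ball_le (hμ : μ ≤ volume) (hν : ν ≤ volume) {u v : E}
    (hu : ‖u‖ = 1) (hv : ‖v‖ = 1) (y : E) {ε : ℝ} (hε : 0 < ε) :
    (μ.prod ν) {p | p.1 • u + p.2 • v ∈ Metric.ball y ε} ≤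
      ENNReal.ofReal (4 * ε ^ 2) * (ENNReal.ofReal √(1 - ⟪u, v⟫_ℝ ^ 2))⁻¹ := by
  set n := u - ⟪u, v⟫_ℝ • v
  have hnorm : √(1 - ⟪u, v⟫_ℝ ^ 2) = ‖n‖ := by
    rw [← norm_sub_inner_smul_sq hu hv, sqrt_sq (norm_nonneg _)]
  have huu : ⟪u, u⟫_ℝ = 1 := by rw [real_inner_self_eq_norm_sq, hu, one_pow]
  have hvv : ⟪v, v⟫_ℝ = 1 := by rw [real_inner_self_eq_norm_sq, hv, one_pow]
  have hun : ⟪u, n⟫_ℝ = ‖n‖ ^ 2 := by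
    rw [norm_sub_inner_smul_sq hu hv, inner_sub_right, inner_smul_right, huu, sq]
  have hvn : ⟪v, n⟫_ℝ = 0 := by
    rw [inner_sub_right, inner_smul_right, hvv, real_inner_comm, mul_one, sub_self]
  rw [hnorm]
  rcases (norm_nonneg n).eq_or_lt with hn0 | hn0
  · simp [← hn0, ENNReal.mul_top, hε.ne']
  have hB : MeasurableSet {p : ℝ × ℝ | p.1 • u + p.2 • v ∈ Metric.ball y ε} :=
    (Metric.isOpen_ball.preimage (by fun_prop)).measurableSet
  refine (prod_le_of_forall_mem_strip hμ hν hB (c := ⟪y, n⟫_ℝ / ‖n‖ ^ 2) (A := ε / ‖n‖) (ε := ε)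
    (f := fun a ↦ ⟪y - a • u, v⟫_ℝ) ?_).trans_eq ?_
  · rintro ⟨a, b⟩ hab
    have hab : ‖a • u + b • v - y‖ ≤ ε := (mem_ball_iff_norm.1 hab).le
    constructor
    · have hinner : ⟪a • u + b • v - y, n⟫_ℝ = (a - ⟪y, n⟫_ℝ / ‖n‖ ^ 2) * ‖n‖ ^ 2 := by
        rw [inner_sub_left, inner_add_left, inner_smul_left, inner_smul_left, hun, hvn]
        simp only [conj_trivial]
        field_simp
        ring
      have := (abs_real_inner_le_norm _ n).trans (mul_le_mul_of_nonneg_right hab hn0.le)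
      rw [hinner, abs_mul, abs_of_nonneg (sq_nonneg ‖n‖)] at this
      rw [le_div_iff₀ hn0]
      nlinarith
    · have hinner : ⟪a • u + b • v - y, v⟫_ℝ = b - ⟪y - a • u, v⟫_ℝ := by
        simp only [inner_sub_left, inner_add_left, inner_smul_left, hvv, conj_trivial]
        ring
      simpa [hinner, hv] using (abs_real_inner_le_norm _ v).trans
        (mul_le_mul_of_nonneg_right hab (norm_nonneg v))
  · rw [← ENNReal.ofReal_inv_of_pos hn0, ← ENNReal.ofReal_mul (by positivity),
      ← ENNReal.ofReal_mul (by positivity)]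
    ring_nf

lemma norm_smul_sub_smul_sq {u v : E} (hu : ‖u‖ = 1) (hv : ‖v‖ = 1) (a b : ℝ) :
    ‖a • u - b • v‖ ^ 2 = (a - b) ^ 2 + 2 * a * b * (1 - ⟪u, v⟫_ℝ) := by
  rw [norm_sub_sq_real, norm_smul, norm_smul, inner_smul_left, inner_smul_right, hu, hv,
    norm_eq_abs, norm_eq_abs, mul_one, mul_one, sq_abs, sq_abs, conj_trivial]
  ring

lemma div_pi_le_of_le_two_mul_arcsin {s w : ℝ} (hs0 : 0 ≤ s) (hs1 : s ≤ 1)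
    (hw : w ≤ 2 * arcsin s) : w / π ≤ s := by
  calc w / π ≤ 2 / π * arcsin s := by
        rw [div_mul_eq_mul_div]
        gcongr
    _ ≤ sin (arcsin s) := mul_le_sin (arcsin_nonneg.2 hs0) (arcsin_le_pi_div_two s)
    _ = s := sin_arcsin (by linarith) hs1

lemma prod_norm_smul_sub_smul_lt_le [SFinite μ] (hμ : μ ≤ volume) (hν : ν ≤ volume)
    (hμ0 : ∀ᵐ x ∂μ, 0 ≤ x) (hν0 : ∀ᵐ x ∂ν, 0 ≤ x) {u v : E} (hu : ‖u‖ = 1) (hv : ‖v‖ = 1)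
    {ε w : ℝ} (hε : 0 < ε) (hw : 0 < w) (hwle : w ≤ 2 * arcsin √((1 - ⟪u, v⟫_ℝ) / 2)) :
    (μ.prod ν) {p | ‖p.1 • u - p.2 • v‖ < ε} ≤ ENNReal.ofReal (4 * π * ε ^ 2 / w) := by
  set s := √((1 - ⟪u, v⟫_ℝ) / 2)
  have hinner : |⟪u, v⟫_ℝ| ≤ 1 := by simpa [hu, hv] using abs_real_inner_le_norm u v
  have hs2 : s ^ 2 = (1 - ⟪u, v⟫_ℝ) / 2 := sq_sqrt (by linarith [(abs_le.1 hinner).2])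
  have hs1 : s ≤ 1 := by nlinarith [(abs_le.1 hinner).1, sqrt_nonneg ((1 - ⟪u, v⟫_ℝ) / 2)]
  have hws : w / π ≤ s := div_pi_le_of_le_two_mul_arcsin (sqrt_nonneg _) hs1 hwle
  have hs0 : 0 < s := lt_of_lt_of_le (by positivity) hws
  have hpos : ∀ᵐ p ∂μ.prod ν, p ∈ Set.Ici (0 : ℝ × ℝ) :=
    (Measure.quasiMeasurePreserving_fst.ae hμ0).and (Measure.quasiMeasurePreserving_snd.ae hν0)
  have hB : MeasurableSet ({p : ℝ × ℝ | ‖p.1 • u - p.2 • v‖ < ε} ∩ Set.Ici 0) :=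
    (isOpen_lt (by fun_prop) (by fun_prop)).measurableSet.inter measurableSet_Ici
  calc (μ.prod ν) {p | ‖p.1 • u - p.2 • v‖ < ε}
      ≤ (μ.prod ν) ({p | ‖p.1 • u - p.2 • v‖ < ε} ∩ Set.Ici 0) :=
        measure_mono_ae (hpos.mono fun p hp hlt ↦ ⟨hlt, hp⟩)
    _ ≤ ENNReal.ofReal (2 * (ε / s)) * ENNReal.ofReal (2 * ε) := by
        refine prod_le_of_forall_mem_strip hμ hν hB (c := 0) (f := id) ?_
        rintro ⟨a, b⟩ ⟨hlt, ha : 0 ≤ a, hb : 0 ≤ b⟩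
        have hsq : (a - b) ^ 2 + 4 * (a * b) * s ^ 2 ≤ ε ^ 2 := by
          refine le_of_eq_of_le ?_ (pow_le_pow_left₀ (norm_nonneg _) hlt.le 2)
          rw [norm_smul_sub_smul_sq hu hv, hs2]
          ring
        have hab : 0 ≤ a * b := mul_nonneg ha hb
        constructor
        · rw [sub_zero, abs_of_nonneg ha, le_div_iff₀ hs0]
          refine le_of_sq_le_sq ?_ hε.le
          nlinarith [mul_nonneg (sq_nonneg (a - b)) (show 0 ≤ 1 - s ^ 2 by nlinarith),
            sq_nonneg (b * s), mul_nonneg hab (sq_nonneg s)]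
        · refine abs_le_of_sq_le_sq ?_ hε.le
          change (b - a) ^ 2 ≤ ε ^ 2
          nlinarith [mul_nonneg hab (sq_nonneg s)]
    _ ≤ ENNReal.ofReal (4 * π * ε ^ 2 / w) := by
        rw [← ENNReal.ofReal_mul (by positivity)]
        refine ENNReal.ofReal_le_ofReal ?_
        calc 2 * (ε / s) * (2 * ε) ≤ 2 * (ε / (w / π)) * (2 * ε) := by gcongr
          _ = 4 * π * ε ^ 2 / w := by field_simp; ring

end TwoSegments

/-- A uniformly distributed direction: a rotation-invariant probability measure carried by the
unit sphere, encoded as a measure on the ambient space. -/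
structure IsUniformOnSphere {E : Type*} [NormedAddCommGroup E] [NormedSpace ℝ E]
    [MeasurableSpace E] (σ : Measure E) : Prop where
  isProbabilityMeasure : IsProbabilityMeasure σ
  ae_norm_eq_one : ∀ᵐ u ∂σ, ‖u‖ = 1
  map_eq : ∀ R : E ≃ₗᵢ[ℝ] E, σ.map R = σ

namespace IsUniformOnSphere

variable {E : Type*} [NormedAddCommGroup E] [InnerProductSpace ℝ E] [FiniteDimensional ℝ E]
  [MeasurableSpace E] [BorelSpace E] {σ : Measure E} {F : ℝ → ℝ≥0∞}

lemma lintegral_inner_eq_of_norm_eq (hσ : IsUniformOnSphere σ) (hF : Measurable F) {v x : E}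
    (hvx : ‖v‖ = ‖x‖) : ∫⁻ u, F ⟪v, u⟫_ℝ ∂σ = ∫⁻ u, F ⟪x, u⟫_ℝ ∂σ := by
  obtain ⟨R, hR⟩ : ∃ R : E ≃ₗᵢ[ℝ] E, R v = x := ⟨_, Submodule.reflection_sub hvx⟩
  conv_rhs => rw [← hσ.map_eq R]
  rw [lintegral_map (by fun_prop) (by fun_prop)]
  simp_rw [← hR, R.inner_map_map]

lemma setLIntegral_ball_inner_div_norm_eq (hF : Measurable F) {u e : E} (hue : ‖u‖ = ‖e‖)
    (r : ℝ) :
    ∫⁻ x in Metric.ball 0 r, F (⟪x, u⟫_ℝ / ‖x‖) = ∫⁻ x in Metric.ball 0 r, F (⟪x, e⟫_ℝ / ‖x‖) := by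
  obtain ⟨R, hR⟩ : ∃ R : E ≃ₗᵢ[ℝ] E, R u = e := ⟨_, Submodule.reflection_sub hue⟩
  have hball : R ⁻¹' Metric.ball 0 r = Metric.ball 0 r := by ext; simp
  rw [← R.measurePreserving.setLIntegral_comp_preimage Metric.isOpen_ball.measurableSet
    (by fun_prop : Measurable fun x ↦ F (⟪x, e⟫_ℝ / ‖x‖)), hball]
  simp_rw [← hR, R.inner_map_map, R.norm_map]

/- Both sides equal the double integral of `F (⟪x, u⟫ / ‖x‖)` over the ball and the sphere. -/
lemma lintegral_inner_mul_volume_ball [Nontrivial E] (hσ : IsUniformOnSphere σ)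
    (hF : Measurable F) {v e : E} (hv : ‖v‖ = 1) (he : ‖e‖ = 1) (r : ℝ) :
    (∫⁻ u, F ⟪v, u⟫_ℝ ∂σ) * volume (Metric.ball (0 : E) r)
      = ∫⁻ x in Metric.ball (0 : E) r, F (⟪x, e⟫_ℝ / ‖x‖) := by
  have := hσ.isProbabilityMeasure
  calc (∫⁻ u, F ⟪v, u⟫_ℝ ∂σ) * volume (Metric.ball (0 : E) r)
      = ∫⁻ _ in Metric.ball (0 : E) r, ∫⁻ u, F ⟪v, u⟫_ℝ ∂σ := (setLIntegral_const _ _).symm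
    _ = ∫⁻ x in Metric.ball (0 : E) r, ∫⁻ u, F (⟪x, u⟫_ℝ / ‖x‖) ∂σ := by
        have hne : ∀ᵐ x : E, x ≠ 0 := by simp [ae_iff]
        refine lintegral_congr_ae (ae_restrict_of_ae (hne.mono fun x hx ↦ ?_))
        have hnorm : ‖v‖ = ‖‖x‖⁻¹ • x‖ := by
          rw [hv, norm_smul, norm_inv, norm_norm, inv_mul_cancel₀ (norm_ne_zero_iff.2 hx)]
        simp only [hσ.lintegral_inner_eq_of_norm_eq hF hnorm, real_inner_smul_left, div_eq_inv_mul]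
    _ = ∫⁻ u, (∫⁻ x in Metric.ball (0 : E) r, F (⟪x, u⟫_ℝ / ‖x‖)) ∂σ :=
        lintegral_lintegral_swap (Measurable.aemeasurable (by fun_prop))
    _ = ∫⁻ _, (∫⁻ x in Metric.ball (0 : E) r, F (⟪x, e⟫_ℝ / ‖x‖)) ∂σ :=
        lintegral_congr_ae (hσ.ae_norm_eq_one.mono fun u hu ↦
          setLIntegral_ball_inner_div_norm_eq hF (hu.trans he.symm) r)
    _ = ∫⁻ x in Metric.ball (0 : E) r, F (⟪x, e⟫_ℝ / ‖x‖) := by simp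

end IsUniformOnSphere

section ArchimedesHatBox

lemma lintegral_comp_sqrt_sq_add_sq {g : ℝ → ℝ≥0∞} (hg : Measurable g) :
    ∫⁻ y : ℝ × ℝ, g √(y.1 ^ 2 + y.2 ^ 2)
      = ENNReal.ofReal (2 * π) * ∫⁻ s, ENNReal.ofReal s * g s := by
  rw [← lintegral_comp_polarCoord_symm, polarCoord_target, Measure.volume_eq_prod,
    ← Measure.prod_restrict, lintegral_prod _ (by fun_prop)]
  have hangle : ∀ s ∈ Set.Ioi (0 : ℝ), ∫⁻ φ in Set.Ioo (-π) π, ENNReal.ofReal s •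
      g √((polarCoord.symm (s, φ)).1 ^ 2 + (polarCoord.symm (s, φ)).2 ^ 2)
      = ENNReal.ofReal (2 * π) * (ENNReal.ofReal s * g s) := by
    intro s hs
    have hnorm (φ : ℝ) : (s * cos φ) ^ 2 + (s * sin φ) ^ 2 = s ^ 2 := by
      linear_combination s ^ 2 * sin_sq_add_cos_sq φ
    simp only [polarCoord_symm_apply, hnorm, sqrt_sq (Set.mem_Ioi.1 hs).le, smul_eq_mul]
    rw [setLIntegral_const, Real.volume_Ioo, mul_comm]
    ring_nf
  rw [setLIntegral_congr_fun measurableSet_Ioi hangle, lintegral_const_mul _ (by fun_prop)]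
  congr 1
  refine setLIntegral_eq_of_support_subset fun s hs ↦ ?_
  by_contra hle
  exact hs (by simp [ENNReal.ofReal_of_nonpos (not_lt.1 hle)])

lemma lintegral_sin_mul_comp_cos (F : ℝ → ℝ≥0∞) :
    ∫⁻ φ in Set.Ioo (-π) π, ENNReal.ofReal (sin φ) * F (cos φ)
      = ∫⁻ c in Set.Icc (-1) 1, F c := by
  have himage := lintegral_image_eq_lintegral_abs_deriv_mul measurableSet_Icc
    (fun φ _ ↦ (hasDerivAt_cos φ).hasDerivWithinAt) bijOn_cos.injOn F
  rw [bijOn_cos.image_eq] at himage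
  have hneg : ∫⁻ φ in Set.Icc (-π) π \ Set.Icc 0 π, ENNReal.ofReal (sin φ) * F (cos φ) = 0 := by
    refine setLIntegral_eq_zero (measurableSet_Icc.diff measurableSet_Icc) ?_
    rintro φ ⟨⟨hlo, hhi⟩, hφ⟩
    have hφ0 : φ ≤ 0 := le_of_not_ge fun h ↦ hφ ⟨h, hhi⟩
    simp [ENNReal.ofReal_of_nonpos (sin_nonpos_of_nonpos_of_neg_pi_le hφ0 hlo)]
  have hinter : Set.Icc (-π) π ∩ Set.Icc 0 π = Set.Icc 0 π :=
    Set.inter_eq_right.2 (Set.Icc_subset_Icc_left (by linarith [pi_pos]))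
  rw [setLIntegral_congr Ioo_ae_eq_Icc, ← lintegral_inter_add_sdiff _ _ measurableSet_Icc, hneg,
    add_zero, hinter, himage]
  refine setLIntegral_congr_fun measurableSet_Icc fun φ hφ ↦ ?_
  rw [abs_neg, abs_of_nonneg (sin_nonneg_of_nonneg_of_le_pi hφ.1 hφ.2)]

lemma lintegral_snd_mul_radial_mul_cos {A F : ℝ → ℝ≥0∞} (hA : Measurable A) (hF : Measurable F) :
    ∫⁻ p : ℝ × ℝ, ENNReal.ofReal p.2 *
        (A √(p.1 ^ 2 + p.2 ^ 2) * F (p.1 / √(p.1 ^ 2 + p.2 ^ 2)))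
      = (∫⁻ s in Set.Ioi 0, ENNReal.ofReal (s ^ 2) * A s) * ∫⁻ c in Set.Icc (-1) 1, F c := by
  rw [← lintegral_comp_polarCoord_symm, polarCoord_target, Measure.volume_eq_prod,
    ← Measure.prod_restrict, ← lintegral_sin_mul_comp_cos,
    ← lintegral_prod_mul (by fun_prop) (by fun_prop), Measure.prod_restrict]
  refine setLIntegral_congr_fun (measurableSet_Ioi.prod measurableSet_Ioo) ?_
  rintro ⟨s, φ⟩ ⟨hs, -⟩
  have hs : 0 < s := hs
  have hnorm : (s * cos φ) ^ 2 + (s * sin φ) ^ 2 = s ^ 2 := by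
    linear_combination s ^ 2 * sin_sq_add_cos_sq φ
  simp only [polarCoord_symm_apply, hnorm, sqrt_sq hs.le, mul_div_cancel_left₀ _ hs.ne',
    smul_eq_mul, ENNReal.ofReal_mul hs.le, ENNReal.ofReal_pow hs.le]
  ring

lemma lintegral_euclideanSpace_fin_three (g : ℝ × ℝ × ℝ → ℝ≥0∞) :
    ∫⁻ x : EuclideanSpace ℝ (Fin 3), g (x 0, x 1, x 2) = ∫⁻ p, g p := by
  have hpi := EuclideanSpace.volume_preserving_symm_measurableEquiv_toLp (Fin 3)
  have hsplit := volume_preserving_piFinSuccAbove (fun _ : Fin 3 ↦ ℝ) 0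
  have hpair := (MeasurePreserving.id (volume : Measure ℝ)).prod (volume_preserving_finTwoArrow ℝ)
  exact ((hpair.comp hsplit).comp hpi).lintegral_comp_emb
    ((((MeasurableEquiv.refl ℝ).prodCongr MeasurableEquiv.finTwoArrow).measurableEmbedding.comp
      (MeasurableEquiv.measurableEmbedding _)).comp (MeasurableEquiv.measurableEmbedding _)) g

/-
Spherical coordinates, obtained by passing to polar coordinates first in the plane of the last two
coordinates and then in the half-plane of the first coordinate and the distance to its axis.
-/
lemma lintegral_radial_mul_comp_div_norm {A F : ℝ → ℝ≥0∞} (hA : Measurable A)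
    (hF : Measurable F) :
    ∫⁻ x : EuclideanSpace ℝ (Fin 3), A ‖x‖ * F (x 0 / ‖x‖)
      = ENNReal.ofReal (2 * π) * (∫⁻ s in Set.Ioi 0, ENNReal.ofReal (s ^ 2) * A s) *
        ∫⁻ c in Set.Icc (-1) 1, F c := by
  set g : ℝ → ℝ → ℝ≥0∞ := fun h s ↦ A √(h ^ 2 + s ^ 2) * F (h / √(h ^ 2 + s ^ 2))
  have hnorm (x : EuclideanSpace ℝ (Fin 3)) : ‖x‖ = √(x 0 ^ 2 + √(x 1 ^ 2 + x 2 ^ 2) ^ 2) := by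
    rw [EuclideanSpace.norm_eq, Fin.sum_univ_three, sq_sqrt (by positivity), add_assoc]
    simp
  calc ∫⁻ x : EuclideanSpace ℝ (Fin 3), A ‖x‖ * F (x 0 / ‖x‖)
      = ∫⁻ p : ℝ × ℝ × ℝ, g p.1 √(p.2.1 ^ 2 + p.2.2 ^ 2) := by
        simp_rw [hnorm]
        exact lintegral_euclideanSpace_fin_three fun p ↦ g p.1 √(p.2.1 ^ 2 + p.2.2 ^ 2)
    _ = ∫⁻ h, ENNReal.ofReal (2 * π) * ∫⁻ s, ENNReal.ofReal s * g h s := by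
        rw [Measure.volume_eq_prod, lintegral_prod _ (by fun_prop)]
        exact lintegral_congr fun h ↦
          lintegral_comp_sqrt_sq_add_sq (g := fun s ↦ g h s) (by fun_prop)
    _ = ENNReal.ofReal (2 * π) * ∫⁻ p : ℝ × ℝ, ENNReal.ofReal p.2 * g p.1 p.2 := by
        rw [lintegral_const_mul _ (by fun_prop), Measure.volume_eq_prod,
          lintegral_prod _ (by fun_prop)]
    _ = _ := by rw [lintegral_snd_mul_radial_mul_cos hA hF, mul_assoc]

namespace IsUniformOnSphere

variable {σ : Measure (EuclideanSpace ℝ (Fin 3))}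

/- **Archimedes' hat-box theorem**. -/
theorem map_inner_eq (hσ : IsUniformOnSphere σ) {v : EuclideanSpace ℝ (Fin 3)} (hv : ‖v‖ = 1) :
    σ.map (fun u ↦ ⟪v, u⟫_ℝ) = (2⁻¹ : ℝ≥0∞) • volume.restrict (Set.Icc (-1) 1) := by
  have := hσ.isProbabilityMeasure
  set V := volume (Metric.ball (0 : EuclideanSpace ℝ (Fin 3)) 1)
  set A : ℝ → ℝ≥0∞ := (Set.Iio 1).indicator 1
  set K := ENNReal.ofReal (2 * π) * ∫⁻ s in Set.Ioi 0, ENNReal.ofReal (s ^ 2) * A s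
  have hcone {F : ℝ → ℝ≥0∞} (hF : Measurable F) :
      (∫⁻ u, F ⟪v, u⟫_ℝ ∂σ) * V = K * ∫⁻ c in Set.Icc (-1) 1, F c := by
    rw [hσ.lintegral_inner_mul_volume_ball hF hv (e := EuclideanSpace.single 0 1) (by simp),
      ← lintegral_radial_mul_comp_div_norm (measurable_one.indicator measurableSet_Iio) hF,
      ← lintegral_indicator Metric.isOpen_ball.measurableSet]
    refine lintegral_congr fun x ↦ ?_
    by_cases hx : ‖x‖ < 1 <;> simp [hx, EuclideanSpace.inner_single_right]
  have hvol : V = K * 2 := by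
    have h := hcone (F := fun _ ↦ 1) measurable_const
    norm_num at h
    simpa using h
  have hV0 : V ≠ 0 := (Metric.measure_ball_pos _ _ one_pos).ne'
  have hK0 : K ≠ 0 := by rintro h; simp [hvol, h] at hV0
  have hKtop : K ≠ ⊤ := by
    have : V ≠ ⊤ := measure_ball_lt_top.ne
    rintro h
    simp [hvol, h] at this
  refine Measure.ext_of_lintegral _ fun F hF ↦ ?_
  have hmul : K * (2 * ∫⁻ u, F ⟪v, u⟫_ℝ ∂σ) = K * ∫⁻ c in Set.Icc (-1) 1, F c := by
    rw [← hcone hF, hvol]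
    ring
  rw [lintegral_map hF (by fun_prop), lintegral_smul_measure,
    ← (ENNReal.mul_right_inj hK0 hKtop).1 hmul, smul_eq_mul, ← mul_assoc,
    ENNReal.inv_mul_cancel two_ne_zero ENNReal.ofNat_ne_top, one_mul]

lemma lintegral_inv_sqrt_one_sub_inner_sq_le (hσ : IsUniformOnSphere σ)
    {v : EuclideanSpace ℝ (Fin 3)} (hv : ‖v‖ = 1) :
    ∫⁻ u, (ENNReal.ofReal √(1 - ⟪v, u⟫_ℝ ^ 2))⁻¹ ∂σ ≤ ENNReal.ofReal π := by
  set F : ℝ → ℝ≥0∞ := fun c ↦ (ENNReal.ofReal √(1 - c ^ 2))⁻¹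
  have hsin (φ : ℝ) : ENNReal.ofReal (sin φ) * F (cos φ) ≤ 1 := by
    simp only [F, ← sin_sq, sqrt_sq_eq_abs]
    exact (mul_le_mul_left (ENNReal.ofReal_le_ofReal (le_abs_self _)) _).trans
      (ENNReal.mul_inv_le_one _)
  calc ∫⁻ u, F ⟪v, u⟫_ℝ ∂σ = 2⁻¹ * ∫⁻ c in Set.Icc (-1) 1, F c := by
        rw [← lintegral_map (f := F) (by fun_prop) (by fun_prop), hσ.map_inner_eq hv,
          lintegral_smul_measure, smul_eq_mul]
    _ ≤ 2⁻¹ * ∫⁻ _ in Set.Ioo (-π) π, 1 := by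
        rw [← lintegral_sin_mul_comp_cos]
        gcongr with φ
        exact hsin φ
    _ = ENNReal.ofReal π := by
        rw [setLIntegral_one, Real.volume_Ioo, sub_neg_eq_add, ← two_mul,
          ENNReal.ofReal_mul zero_le_two, ENNReal.ofReal_ofNat, ← mul_assoc,
          ENNReal.inv_mul_cancel two_ne_zero ENNReal.ofNat_ne_top, one_mul]

end IsUniformOnSphere
end ArchimedesHatBox

section FlightCharFun

lemma integral_inv_one_sub_mul_I {s : ℝ} (hs : s ≠ 0) :
    ∫ c in (-1 : ℝ)..1, (1 - (s * c : ℝ) * Complex.I)⁻¹ = ((2 * (arctan s / s) : ℝ) : ℂ) := by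
  set f : ℝ → ℂ := fun c ↦ (1 - (s * c : ℝ) * Complex.I)⁻¹
  have hne (x : ℝ) : (1 - x * Complex.I : ℂ) ≠ 0 := fun h ↦ by simpa using congrArg Complex.re h
  have hf : Continuous f := Continuous.inv₀ (by fun_prop) fun c ↦ hne _
  have heven (c : ℝ) : f c + f (-c) = ((2 * (1 + (s * c) ^ 2)⁻¹ : ℝ) : ℂ) := by
    have hplus : (1 + s * c * Complex.I : ℂ) ≠ 0 := by simpa using hne (-(s * c))
    have hprod : (1 + (s * c) ^ 2 : ℂ) = (1 - s * c * Complex.I) * (1 + s * c * Complex.I) := by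
      linear_combination (s * c : ℂ) ^ 2 * Complex.I_sq
    have hminus : (1 - s * c * Complex.I : ℂ) ≠ 0 := by simpa using hne (s * c)
    simp only [f]
    push_cast
    rw [hprod, mul_neg, neg_mul, sub_neg_eq_add]
    field_simp
    ring
  have hreflect : ∫ c in (-1 : ℝ)..1, f (-c) = ∫ c in (-1 : ℝ)..1, f c := by simp
  have hdouble : 2 * ∫ c in (-1 : ℝ)..1, f c = 2 * ((2 * (arctan s / s) : ℝ) : ℂ) := by
    calc 2 * ∫ c in (-1 : ℝ)..1, f c = ∫ c in (-1 : ℝ)..1, (f c + f (-c)) := by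
          rw [intervalIntegral.integral_add (hf.intervalIntegrable _ _)
            (Continuous.intervalIntegrable (by fun_prop) _ _), hreflect, two_mul]
      _ = ((2 * ∫ c in (-1 : ℝ)..1, (1 + (s * c) ^ 2)⁻¹ : ℝ) : ℂ) := by
          simp_rw [heven]
          rw [intervalIntegral.integral_ofReal, intervalIntegral.integral_const_mul]
      _ = 2 * ((2 * (arctan s / s) : ℝ) : ℂ) := by
          rw [intervalIntegral.integral_comp_mul_left (fun x ↦ (1 + x ^ 2)⁻¹) hs,
            integral_inv_one_add_sq, mul_neg_one, arctan_neg, mul_one]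
          push_cast [smul_eq_mul]
          ring
  exact mul_left_cancel₀ two_ne_zero hdouble

lemma IsUniformOnSphere.charFun_map_smul {σ : Measure (EuclideanSpace ℝ (Fin 3))}
    (hσ : IsUniformOnSphere σ) {t : EuclideanSpace ℝ (Fin 3)} (ht : t ≠ 0) :
    charFun (((expMeasure 1).prod σ).map fun p ↦ p.1 • p.2) t = ((arctan ‖t‖ / ‖t‖ : ℝ) : ℂ) := by
  have := hσ.isProbabilityMeasure
  have := isProbabilityMeasure_expMeasure one_pos
  have ht' : ‖t‖ ≠ 0 := norm_ne_zero_iff.2 ht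
  have hint : Integrable (fun p : ℝ × EuclideanSpace ℝ (Fin 3) ↦
      Complex.exp (⟪p.1 • p.2, t⟫_ℝ * Complex.I)) ((expMeasure 1).prod σ) :=
    .of_bound (C := 1) (by fun_prop) (.of_forall fun p ↦ by rw [Complex.norm_exp_ofReal_mul_I])
  have hradial (u : EuclideanSpace ℝ (Fin 3)) :
      ∫ x, Complex.exp (⟪x • u, t⟫_ℝ * Complex.I) ∂(expMeasure 1)
        = (1 - (‖t‖ * ⟪‖t‖⁻¹ • t, u⟫_ℝ : ℝ) * Complex.I)⁻¹ := by
    rw [real_inner_smul_left, mul_inv_cancel_left₀ ht', ← one_div, real_inner_comm]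
    convert charFun_expMeasure one_pos ⟪u, t⟫_ℝ using 1
    · rw [charFun_apply]
      congr with x
      simp [inner_smul_left, mul_comm]
    · simp
  rw [charFun_apply, integral_map (by fun_prop) (by fun_prop), integral_prod_symm _ hint]
  simp_rw [hradial]
  rw [← integral_map (φ := fun u ↦ ⟪‖t‖⁻¹ • t, u⟫_ℝ)
      (f := fun c : ℝ ↦ (1 - (‖t‖ * c : ℝ) * Complex.I)⁻¹) (by fun_prop)
      (Measurable.aestronglyMeasurable (by fun_prop)),
    hσ.map_inner_eq (by rw [norm_smul, norm_inv, norm_norm, inv_mul_cancel₀ ht']),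
    integral_smul_measure, integral_Icc_eq_integral_Ioc,
    ← intervalIntegral.integral_of_le (by norm_num), integral_inv_one_sub_mul_I ht']
  simp

lemma arctan_div_nonneg (s : ℝ) : 0 ≤ arctan s / s := by
  rcases le_total 0 s with hs | hs
  · exact div_nonneg (arctan_nonneg.2 hs) hs
  · exact div_nonneg_of_nonpos (arctan_le_zero.2 hs) hs

lemma arctan_div_le_one_sub {s : ℝ} (hs : 0 < s) :
    arctan s / s ≤ 1 - s ^ 2 / (3 * (1 + s ^ 2)) := by
  set h : ℝ → ℝ := fun x ↦ x - x ^ 3 / (3 * (1 + x ^ 2)) - arctan x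
  have hderiv (x : ℝ) : HasDerivAt h (2 * x ^ 4 / (3 * (1 + x ^ 2) ^ 2)) x := by
    have hden : 3 * (1 + x ^ 2) ≠ 0 := by positivity
    refine (((hasDerivAt_id x).sub ((hasDerivAt_pow 3 x).div
      (((hasDerivAt_pow 2 x).const_add 1).const_mul 3) hden)).sub
      (hasDerivAt_arctan x)).congr_deriv ?_
    push_cast
    field_simp
    ring
  have hmono : Monotone h := monotone_of_hasDerivAt_nonneg hderiv fun x ↦ by positivity
  have hle : h 0 ≤ h s := hmono hs.le
  have hle' : arctan s ≤ s - s ^ 3 / (3 * (1 + s ^ 2)) := by simpa [h] using hle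
  rw [div_le_iff₀ hs]
  exact hle'.trans_eq (by ring)

end FlightCharFun

section FourierConcentration

lemma norm_cexp_neg_mul_sq_norm_add_I_mul {V : Type*} [NormedAddCommGroup V] (b s : ℝ)
    (t : V) :
    ‖Complex.exp (-b * ‖t‖ ^ 2 + Complex.I * s)‖ = rexp (-b * ‖t‖ ^ 2) := by
  simp [Complex.norm_exp, ← Complex.ofReal_pow]

variable {E : Type*} [NormedAddCommGroup E] [InnerProductSpace ℝ E] [FiniteDimensional ℝ E]

lemma inv_pow_le_gaussian [Nontrivial E] {x : E} {ε : ℝ} (hε : 0 < ε) (hx : ‖x‖ ≤ ε) :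
    (ε ^ Module.finrank ℝ E)⁻¹
      ≤ (π / (ε ^ 2 / 2)) ^ (Module.finrank ℝ E / 2 : ℝ)
        * rexp (-(‖x‖ ^ 2 / (4 * (ε ^ 2 / 2)))) := by
  set d := Module.finrank ℝ E
  have hd : (1 : ℝ) ≤ d := by exact_mod_cast Module.finrank_pos
  have hexp : 1 / 2 ≤ rexp (-(‖x‖ ^ 2 / (4 * (ε ^ 2 / 2)))) := by
    have hquot : ‖x‖ ^ 2 / (4 * (ε ^ 2 / 2)) ≤ 1 / 2 := by
      rw [div_le_div_iff₀ (by positivity) two_pos]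
      have := pow_le_pow_left₀ (norm_nonneg x) hx 2
      linarith
    linarith [add_one_le_exp (-(‖x‖ ^ 2 / (4 * (ε ^ 2 / 2))))]
  have hscale : (π / (ε ^ 2 / 2)) ^ (d / 2 : ℝ) = (2 * π) ^ (d / 2 : ℝ) * (ε ^ d)⁻¹ := by
    have hbase : π / (ε ^ 2 / 2) = 2 * π * ε⁻¹ ^ (2 : ℝ) := by
      rw [rpow_ofNat]
      field_simp
    rw [hbase, mul_rpow (by positivity) (by positivity), ← rpow_mul (by positivity),
      mul_div_cancel₀ _ (two_ne_zero' ℝ), rpow_natCast, inv_pow]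
  have hconst : 2 ≤ (2 * π) ^ (d / 2 : ℝ) := by
    calc (2 : ℝ) = 4 ^ (1 / 2 : ℝ) := by rw [← sqrt_eq_rpow]; norm_num
      _ ≤ (2 * π) ^ (1 / 2 : ℝ) := by gcongr; linarith [pi_gt_three]
      _ ≤ (2 * π) ^ (d / 2 : ℝ) := by gcongr; linarith [pi_gt_three]
  calc (ε ^ d)⁻¹ = 2 * (ε ^ d)⁻¹ * (1 / 2) := by ring
    _ ≤ (2 * π) ^ (d / 2 : ℝ) * (ε ^ d)⁻¹ * rexp (-(‖x‖ ^ 2 / (4 * (ε ^ 2 / 2)))) := by gcongr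
    _ = _ := by rw [hscale]

variable [MeasurableSpace E] [BorelSpace E]

lemma integral_cexp_neg_mul_sq_norm_add_I_mul_inner {b : ℝ} (hb : 0 < b) (x : E) :
    ∫ t : E, Complex.exp (-b * ‖t‖ ^ 2 + Complex.I * ⟪x, t⟫_ℝ)
      = (((π / b) ^ (Module.finrank ℝ E / 2 : ℝ) * rexp (-(‖x‖ ^ 2 / (4 * b))) : ℝ) : ℂ) := by
  rw [GaussianFourier.integral_cexp_neg_mul_sq_norm_add (by simpa using hb)]
  push_cast
  rw [Complex.ofReal_cpow (by positivity), Complex.I_sq, neg_one_mul, neg_div]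
  push_cast
  rfl

lemma integrable_rexp_neg_mul_sq_norm {b : ℝ} (hb : 0 < b) :
    Integrable fun t : E ↦ rexp (-b * ‖t‖ ^ 2) := by
  have h := (GaussianFourier.integrable_cexp_neg_mul_sq_norm_add (V := E) (b := b)
    (by simpa using hb) Complex.I 0).norm
  simpa only [norm_cexp_neg_mul_sq_norm_add_I_mul] using h

lemma integral_gaussian_eq_integral_charFun (ν : Measure E) [IsFiniteMeasure ν] (y : E) {b : ℝ}
    (hb : 0 < b) :
    ((∫ x, (π / b) ^ (Module.finrank ℝ E / 2 : ℝ) * rexp (-(‖x - y‖ ^ 2 / (4 * b))) ∂ν : ℝ) : ℂ)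
      = ∫ t : E, Complex.exp (-b * ‖t‖ ^ 2 + Complex.I * (-⟪y, t⟫_ℝ : ℝ)) * charFun ν t := by
  have hint : Integrable (fun p : E × E ↦
      Complex.exp (-b * ‖p.2‖ ^ 2 + Complex.I * ⟪p.1 - y, p.2⟫_ℝ)) (ν.prod volume) := by
    refine ((integrable_rexp_neg_mul_sq_norm (E := E) hb).comp_snd ν).mono
      (Measurable.aestronglyMeasurable (by fun_prop)) (.of_forall fun p ↦ ?_)
    rw [norm_cexp_neg_mul_sq_norm_add_I_mul, norm_of_nonneg (exp_pos _).le]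
  rw [← integral_complex_ofReal]
  simp_rw [← integral_cexp_neg_mul_sq_norm_add_I_mul_inner hb]
  rw [integral_integral_swap hint]
  refine integral_congr_ae (.of_forall fun t ↦ ?_)
  simp only [charFun_apply]
  rw [← integral_const_mul]
  refine integral_congr_ae (.of_forall fun x ↦ ?_)
  simp only [← Complex.exp_add, inner_sub_left]
  push_cast
  ring_nf

/- The indicator of the ball is dominated by a Gaussian, whose integral against `ν` is, by Fubini,
a Gaussian-weighted integral of the characteristic function. -/
lemma measure_ball_le_lintegral_charFun [Nontrivial E] (ν : Measure E) [IsFiniteMeasure ν] (y : E)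
    {ε : ℝ} (hε : 0 < ε) :
    ν (Metric.ball y ε)
      ≤ ENNReal.ofReal (ε ^ Module.finrank ℝ E) * ∫⁻ t : E, ‖charFun ν t‖ₑ := by
  set b := ε ^ 2 / 2
  have hb : 0 < b := by positivity
  set g : E → ℝ := fun x ↦
    (π / b) ^ (Module.finrank ℝ E / 2 : ℝ) * rexp (-(‖x - y‖ ^ 2 / (4 * b)))
  have hg0 (x : E) : 0 ≤ g x := by positivity
  have hgint : Integrable g ν := by
    refine Integrable.const_mul (.of_bound (C := 1) (by fun_prop) (.of_forall fun x ↦ ?_)) _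
    rw [norm_of_nonneg (exp_pos _).le, exp_le_one_iff, neg_nonpos]
    positivity
  have hupper : ∫⁻ x, ENNReal.ofReal (g x) ∂ν ≤ ∫⁻ t : E, ‖charFun ν t‖ₑ := by
    calc ∫⁻ x, ENNReal.ofReal (g x) ∂ν = ‖((∫ x, g x ∂ν : ℝ) : ℂ)‖ₑ := by
          rw [← ofReal_integral_eq_lintegral_ofReal hgint (.of_forall hg0), ← ofReal_norm,
            Complex.norm_real, norm_of_nonneg (integral_nonneg hg0)]
      _ ≤ ∫⁻ t : E, ‖charFun ν t‖ₑ := by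
          rw [integral_gaussian_eq_integral_charFun ν y hb]
          refine (enorm_integral_le_lintegral_enorm _).trans (lintegral_mono fun t ↦ ?_)
          rw [enorm_mul, ← ofReal_norm, norm_cexp_neg_mul_sq_norm_add_I_mul]
          refine mul_le_of_le_one_left' (ENNReal.ofReal_le_one.2 (exp_le_one_iff.2 ?_))
          rw [neg_mul, neg_nonpos]
          positivity
  have hlower : ENNReal.ofReal (ε ^ Module.finrank ℝ E)⁻¹ * ν (Metric.ball y ε)
      ≤ ∫⁻ x, ENNReal.ofReal (g x) ∂ν := by
    rw [← setLIntegral_const]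
    refine (setLIntegral_mono' Metric.isOpen_ball.measurableSet fun x hx ↦ ?_).trans
      (setLIntegral_le_lintegral _ _)
    exact ENNReal.ofReal_le_ofReal (inv_pow_le_gaussian hε (mem_ball_iff_norm.1 hx).le)
  rw [ENNReal.ofReal_inv_of_pos (by positivity), ENNReal.inv_mul_le_iff
    (ENNReal.ofReal_pos.2 (by positivity)).ne' ENNReal.ofReal_ne_top] at hlower
  exact hlower.trans (mul_le_mul_right hupper _)

end FourierConcentration

/-- The `L¹` norm of the characteristic function of a sum of `n` independent flights, see
`IsUniformOnSphere.charFun_map_smul`. -/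
noncomputable def flightCharNorm (n : ℕ) : ℝ≥0∞ :=
  ∫⁻ t : EuclideanSpace ℝ (Fin 3), ENNReal.ofReal (arctan ‖t‖ / ‖t‖) ^ n

lemma pow_four_div_one_sub_le {g s : ℝ} (hg0 : 0 ≤ g) (hs : 0 < s) (hg2 : g * s ≤ 2)
    (hg1 : g ≤ 1 - s ^ 2 / (3 * (1 + s ^ 2))) :
    g ^ 4 / (1 - g) ≤ 75 / (s ^ 2 * (1 + s ^ 2)) := by
  have hd : 0 < s ^ 2 / (3 * (1 + s ^ 2)) := by positivity
  have hg : g ^ 2 ≤ 1 := by nlinarith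
  have hgs : (g * s) ^ 2 ≤ 4 := by nlinarith [mul_nonneg hg0 hs.le]
  calc g ^ 4 / (1 - g) ≤ g ^ 4 / (s ^ 2 / (3 * (1 + s ^ 2))) := by gcongr; linarith
    _ = (g ^ 2 + (g * s) ^ 2) ^ 2 * 3 / (s ^ 2 * (1 + s ^ 2)) := by field_simp
    _ ≤ (1 + 4) ^ 2 * 3 / (s ^ 2 * (1 + s ^ 2)) := by gcongr
    _ = 75 / (s ^ 2 * (1 + s ^ 2)) := by norm_num

lemma tsum_flightCharNorm_lt_top : ∑' n, flightCharNorm (n + 4) < ⊤ := by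
  have hdom : Integrable fun t : EuclideanSpace ℝ (Fin 3) ↦
      75 / (‖t‖ ^ 2 * (1 + ‖t‖ ^ 2)) := by
    refine (integrable_fun_norm_addHaar volume (f := fun s ↦ 75 / (s ^ 2 * (1 + s ^ 2)))).2 ?_
    refine (integrable_inv_one_add_sq.const_mul 75).integrableOn.congr_fun (fun s hs ↦ ?_)
      measurableSet_Ioi
    have hs0 : s ≠ 0 := (Set.mem_Ioi.1 hs).ne'
    simp only [finrank_euclideanSpace, Fintype.card_fin, smul_eq_mul, Nat.add_one_sub_one]
    field_simp
  unfold flightCharNorm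
  rw [← lintegral_tsum fun n ↦ by fun_prop]
  refine (lintegral_mono_ae ?_).trans_lt hdom.lintegral_lt_top
  have hne : ∀ᵐ t : EuclideanSpace ℝ (Fin 3), t ≠ 0 := by simp [ae_iff]
  refine hne.mono fun t ht ↦ ?_
  have hs : 0 < ‖t‖ := norm_pos_iff.2 ht
  set g := arctan ‖t‖ / ‖t‖
  have hg0 : 0 ≤ g := arctan_div_nonneg _
  have hg1 := arctan_div_le_one_sub hs
  have hg2 : g * ‖t‖ ≤ 2 := by
    rw [div_mul_cancel₀ _ hs.ne']
    linarith [arctan_lt_pi_div_two ‖t‖, pi_le_four]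
  have hlt : g < 1 := hg1.trans_lt (sub_lt_self _ (by positivity))
  calc ∑' n, ENNReal.ofReal g ^ (n + 4)
      = ENNReal.ofReal (g ^ 4 / (1 - g)) := by
        simp_rw [pow_add]
        rw [ENNReal.tsum_mul_right, ENNReal.tsum_geometric, ← ENNReal.ofReal_one,
          ← ENNReal.ofReal_sub _ hg0, ← ENNReal.ofReal_inv_of_pos (sub_pos.2 hlt),
          ← ENNReal.ofReal_pow hg0, mul_comm, ← ENNReal.ofReal_mul (by positivity), div_eq_mul_inv]
    _ ≤ ENNReal.ofReal (75 / (‖t‖ ^ 2 * (1 + ‖t‖ ^ 2))) :=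
        ENNReal.ofReal_le_ofReal (pow_four_div_one_sub_le hg0 hs hg2 hg1)

section Independence

variable {Ω γ δ : Type*} [MeasurableSpace Ω] [MeasurableSpace γ] [MeasurableSpace δ]
  {μ : Measure Ω} [IsFiniteMeasure μ] {Y : Ω → γ} {V : Ω → δ}

lemma lintegral_prodMk_of_indepFun (hY : Measurable Y) (hV : Measurable V) (hi : IndepFun Y V μ)
    {f : γ × δ → ℝ≥0∞} (hf : Measurable f) :
    ∫⁻ ω, f (Y ω, V ω) ∂μ = ∫⁻ ω, ∫⁻ u, f (Y ω, u) ∂μ.map V ∂μ := by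
  rw [← lintegral_map hf (hY.prodMk hV), (indepFun_iff_map_prod_eq_prod_map_map hY.aemeasurable
    hV.aemeasurable).1 hi, lintegral_prod _ hf.aemeasurable,
    lintegral_map (hf.lintegral_prod_right' (ν := μ.map V)) hY]

lemma measure_prodMk_mem_of_indepFun (hY : Measurable Y) (hV : Measurable V)
    (hi : IndepFun Y V μ) {B : Set (γ × δ)} (hB : MeasurableSet B) :
    μ {ω | (Y ω, V ω) ∈ B} = ∫⁻ ω, μ.map V (Prod.mk (Y ω) ⁻¹' B) ∂μ := by
  change μ ((fun ω ↦ (Y ω, V ω)) ⁻¹' B) = _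
  rw [← Measure.map_apply (hY.prodMk hV) hB, (indepFun_iff_map_prod_eq_prod_map_map
    hY.aemeasurable hV.aemeasurable).1 hi, Measure.prod_apply hB,
    lintegral_map (measurable_measure_prodMk_left hB) hY]

lemma measure_prodMk_mem_le_mul_of_indepFun (hY : Measurable Y) (hV : Measurable V)
    (hi : IndepFun Y V μ) {B B' : Set (γ × δ)} (hB : MeasurableSet B) (hB' : MeasurableSet B')
    {c : ℝ≥0∞}
    (h : ∀ᵐ ω ∂μ, μ.map V (Prod.mk (Y ω) ⁻¹' B) ≤ c * μ.map V (Prod.mk (Y ω) ⁻¹' B')) :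
    μ {ω | (Y ω, V ω) ∈ B} ≤ c * μ {ω | (Y ω, V ω) ∈ B'} := by
  rw [measure_prodMk_mem_of_indepFun hY hV hi hB, measure_prodMk_mem_of_indepFun hY hV hi hB']
  exact (lintegral_mono_ae h).trans_eq
    (lintegral_const_mul _ ((measurable_measure_prodMk_left hB').comp hY))

lemma measure_inter_prodMk_mem_le_of_indepFun (hY : Measurable Y) (hV : Measurable V)
    (hi : IndepFun Y V μ) {A : Set γ} (hA : MeasurableSet A) {B : Set (γ × δ)}
    (hB : MeasurableSet B) {c : ℝ≥0∞} (hc : ∀ y, μ {ω | (y, V ω) ∈ B} ≤ c) :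
    μ {ω | Y ω ∈ A ∧ (Y ω, V ω) ∈ B} ≤ μ {ω | Y ω ∈ A} * c := by
  have hAB : MeasurableSet (Prod.fst ⁻¹' A ∩ B) := (measurable_fst hA).inter hB
  calc μ {ω | Y ω ∈ A ∧ (Y ω, V ω) ∈ B}
      = ∫⁻ ω, μ.map V (Prod.mk (Y ω) ⁻¹' (Prod.fst ⁻¹' A ∩ B)) ∂μ :=
        measure_prodMk_mem_of_indepFun hY hV hi hAB
    _ ≤ ∫⁻ ω, (Y ⁻¹' A).indicator (fun _ ↦ c) ω ∂μ := lintegral_mono fun ω ↦ by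
        rw [Measure.map_apply hV (measurable_prodMk_left hAB)]
        by_cases hω : Y ω ∈ A
        · simpa [Set.preimage, hω] using hc (Y ω)
        · simp [Set.preimage, hω]
    _ = μ {ω | Y ω ∈ A} * c := by
        rw [lintegral_indicator (hY hA), setLIntegral_const, mul_comm]; rfl

end Independence

section Hitting

variable {E : Type*} [NormedAddCommGroup E] [NormedSpace ℝ E]

lemma mem_thickening_segment_iff {ρ : ℝ} {x y z : E} :
    z ∈ Metric.thickening ρ (segment ℝ x y) ↔
      ∃ t ∈ Set.Icc (0 : ℝ) 1, dist z (AffineMap.lineMap x y t) < ρ := by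
  rw [Metric.mem_thickening_iff, segment_eq_image_lineMap, Set.exists_mem_image]

lemma isOpen_setOf_mem_thickening_segment (ρ : ℝ) :
    IsOpen {p : E × E × E | p.1 ∈ Metric.thickening ρ (segment ℝ p.2.1 p.2.2)} := by
  simp only [mem_thickening_segment_iff, Set.ofPred_exists, AffineMap.lineMap_apply_module]
  exact isOpen_iUnion fun t ↦ isOpen_const.and (isOpen_lt (by fun_prop) continuous_const)

lemma mem_thickening_segment_add_iff {ρ : ℝ} {x y z : E} :
    z ∈ Metric.thickening ρ (segment ℝ x (x + y)) ↔
      z - x ∈ Metric.thickening ρ (segment ℝ 0 y) := by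
  simp [mem_thickening_segment_iff, AffineMap.lineMap_apply, dist_eq_norm, sub_sub, add_comm x]

lemma exists_first_hitting_time {u z : E} {ρ : ℝ}
    (h : ∃ s > (0 : ℝ), z ∈ Metric.thickening ρ (segment ℝ 0 (s • u))) :
    ∃ a ≥ (0 : ℝ), dist z (a • u) ≤ ρ ∧
      ∀ s > (0 : ℝ), z ∈ Metric.thickening ρ (segment ℝ 0 (s • u)) → a ≤ s := by
  set H : Set ℝ := {a | 0 ≤ a ∧ dist z (a • u) < ρ}
  have hbdd : BddBelow H := ⟨0, fun a ha ↦ ha.1⟩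
  have hhit : ∀ s > (0 : ℝ), z ∈ Metric.thickening ρ (segment ℝ 0 (s • u)) → ∃ a ∈ H, a ≤ s := by
    intro s hs hz
    obtain ⟨t, ⟨ht0, ht1⟩, ht⟩ := mem_thickening_segment_iff.1 hz
    refine ⟨t * s, ⟨by positivity, ?_⟩, mul_le_of_le_one_left hs.le ht1⟩
    simpa [AffineMap.lineMap_apply_module, smul_smul] using ht
  have hne : H.Nonempty := by
    obtain ⟨s, hs, hz⟩ := h
    exact (hhit s hs hz).imp fun a ha ↦ ha.1
  obtain ⟨ha0, haρ⟩ : 0 ≤ sInf H ∧ dist z (sInf H • u) ≤ ρ :=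
    closure_minimal (t := {a | 0 ≤ a ∧ dist z (a • u) ≤ ρ}) (fun a ha ↦ ⟨ha.1, ha.2.le⟩)
      ((isClosed_le (by fun_prop) (by fun_prop)).and (isClosed_le (by fun_prop) (by fun_prop)))
      (csInf_mem_closure hne hbdd)
  refine ⟨sInf H, ha0, haρ, fun s hs hz ↦ ?_⟩
  obtain ⟨b, hb, hbs⟩ := hhit s hs hz
  exact (csInf_le hbdd hb).trans hbs

lemma exp_neg_le_div_mul_sub (a : ℝ) {ρ : ℝ} (hρ : 0 < ρ) (hρ2 : ρ ≤ 2) :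
    exp (-a) ≤ 4 / ρ * (exp (-a) - exp (-(a + ρ / 2))) := by
  have hexp : exp (-(ρ / 2)) ≤ 1 - ρ / 4 :=
    calc exp (-(ρ / 2)) = (exp (ρ / 2))⁻¹ := exp_neg _
      _ ≤ (ρ / 2 + 1)⁻¹ := by gcongr; exact add_one_le_exp _
      _ ≤ 1 - ρ / 4 := by rw [inv_le_iff_one_le_mul₀ (by positivity)]; nlinarith
  rw [neg_add, exp_add, div_mul_eq_mul_div, le_div_iff₀ hρ]
  nlinarith [exp_pos (-a)]

/- Once the flight enters the closed ball of radius `ρ` around `z`, it ends within a further time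
`ρ / 2` with probability at least `ρ / 4`, and is then still within `2 * ρ` of `z`. -/
lemma expMeasure_mem_thickening_segment_le {u : E} (hu : ‖u‖ = 1) (z : E) {ρ : ℝ} (hρ : 0 < ρ)
    (hρ2 : ρ ≤ 2) :
    expMeasure 1 {s | z ∈ Metric.thickening ρ (segment ℝ 0 (s • u))}
      ≤ ENNReal.ofReal (4 / ρ) * expMeasure 1 {s | s • u ∈ Metric.ball z (2 * ρ)} := by
  by_cases h : ∃ s > (0 : ℝ), z ∈ Metric.thickening ρ (segment ℝ 0 (s • u))
  swap
  · push Not at h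
    have : expMeasure 1 {s | z ∈ Metric.thickening ρ (segment ℝ 0 (s • u))} = 0 :=
      measure_eq_zero_iff_ae_notMem.2 ((expMeasure_ae_pos one_pos).mono h)
    simp only [this, zero_le]
  obtain ⟨a, ha0, haρ, ha⟩ := exists_first_hitting_time h
  have hIoc : Set.Ioc a (a + ρ / 2) ⊆ {s | s • u ∈ Metric.ball z (2 * ρ)} := fun s hs ↦
    calc dist (s • u) z ≤ dist (s • u) (a • u) + dist z (a • u) := dist_triangle_right _ _ _
      _ = (s - a) + dist z (a • u) := by
        rw [dist_eq_norm, ← sub_smul, norm_smul, hu, mul_one, norm_of_nonneg (sub_nonneg.2 hs.1.le)]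
      _ < 2 * ρ := by linarith [hs.2]
  calc expMeasure 1 {s | z ∈ Metric.thickening ρ (segment ℝ 0 (s • u))}
      ≤ expMeasure 1 (Set.Ici a) := measure_mono_ae ((expMeasure_ae_pos one_pos).mono ha)
    _ = ENNReal.ofReal (exp (-a)) := by rw [expMeasure_Ici one_pos ha0, one_mul]
    _ ≤ ENNReal.ofReal (4 / ρ) * ENNReal.ofReal (exp (-a) - exp (-(a + ρ / 2))) := by
        rw [← ENNReal.ofReal_mul (by positivity)]
        exact ENNReal.ofReal_le_ofReal (exp_neg_le_div_mul_sub a hρ hρ2)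
    _ = ENNReal.ofReal (4 / ρ) * expMeasure 1 (Set.Ioc a (a + ρ / 2)) := by
        rw [expMeasure_Ioc one_pos ha0 (by linarith), one_mul, one_mul]
    _ ≤ _ := by gcongr

variable [MeasurableSpace E] [BorelSpace E] [SecondCountableTopology E]

lemma measure_mem_thickening_segment_le {Ω γ : Type*} [MeasurableSpace Ω] [MeasurableSpace γ]
    {μ : Measure Ω} [IsFiniteMeasure μ] {X : Ω → ℝ} {V Z : Ω → E} {Y : Ω → γ} {A : Set γ}
    (hX : Measurable X) (hXμ : μ.map X = expMeasure 1) (hV : ∀ᵐ ω ∂μ, ‖V ω‖ = 1)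
    (hVZY : Measurable fun ω ↦ (V ω, Z ω, Y ω)) (hA : MeasurableSet A)
    (hi : IndepFun (fun ω ↦ (V ω, Z ω, Y ω)) X μ) {ρ : ℝ} (hρ : 0 < ρ) (hρ2 : ρ ≤ 2) :
    μ {ω | Y ω ∈ A ∧ Z ω ∈ Metric.thickening ρ (segment ℝ 0 (X ω • V ω))}
      ≤ ENNReal.ofReal (4 / ρ) * μ {ω | Y ω ∈ A ∧ X ω • V ω ∈ Metric.ball (Z ω) (2 * ρ)} := by
  have hfst : MeasurableSet {p : (E × E × γ) × ℝ | p.1.2.2 ∈ A} :=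
    (measurable_snd.comp (measurable_snd.comp measurable_fst)) hA
  have hseg : MeasurableSet {p : (E × E × γ) × ℝ |
      p.1.2.1 ∈ Metric.thickening ρ (segment ℝ 0 (p.2 • p.1.1))} :=
    (isOpen_setOf_mem_thickening_segment ρ).measurableSet.preimage
      (f := fun p : (E × E × γ) × ℝ ↦ (p.1.2.1, (0 : E), p.2 • p.1.1)) (by fun_prop)
  have hball : MeasurableSet {p : (E × E × γ) × ℝ | p.2 • p.1.1 ∈ Metric.ball p.1.2.1 (2 * ρ)} :=
    measurableSet_lt (f := fun p : (E × E × γ) × ℝ ↦ dist (p.2 • p.1.1) p.1.2.1) (by fun_prop)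
      measurable_const
  refine measure_prodMk_mem_le_mul_of_indepFun hVZY hX hi (hfst.inter hseg) (hfst.inter hball) ?_
  filter_upwards [hV] with ω hω
  rw [hXμ]
  by_cases hY : Y ω ∈ A
  · simpa [Set.preimage, hY] using expMeasure_mem_thickening_segment_le hω (Z ω) hρ hρ2
  · simp [Set.preimage, hY]

end Hitting

section ExponentialTimes

variable {Ω : Type*} [MeasurableSpace Ω] {μ : Measure Ω} {X : ℕ → Ω → ℝ}

lemma measurable_flightTheta (hX : ∀ k, Measurable (X k)) (k : ℕ) :
    Measurable (flightTheta X k) :=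
  Finset.measurable_fun_sum _ fun l _ ↦ hX l

lemma lintegral_exp_neg_mul_flightTheta (hX : ∀ k, Measurable (X k)) (hind : iIndepFun X μ)
    (hlaw : ∀ k, μ.map (X k) = expMeasure 1) (k : ℕ) {l : ℝ} (hl : 0 < l) :
    ∫⁻ ω, ENNReal.ofReal (exp (-(l * flightTheta X k ω))) ∂μ
      = ENNReal.ofReal (1 / (1 + l)) ^ k := by
  have hexp : Measurable fun x ↦ ENNReal.ofReal (exp (-(l * x))) := by fun_prop
  have hprod (ω : Ω) : ENNReal.ofReal (exp (-(l * flightTheta X k ω)))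
      = ∏ i ∈ Finset.range k, ENNReal.ofReal (exp (-(l * X i ω))) := by
    rw [← ENNReal.ofReal_prod_of_nonneg fun _ _ ↦ (exp_pos _).le, ← exp_sum,
      Finset.sum_neg_distrib, ← Finset.mul_sum, flightTheta]
  simp_rw [hprod]
  rw [lintegral_prod_eq_prod_lintegral_of_indepFun _ (fun i ω ↦ ENNReal.ofReal (exp (-(l * X i ω))))
    (hind.comp _ fun _ ↦ hexp) fun i ↦ hexp.comp (hX i), Finset.prod_eq_pow_card, Finset.card_range]
  intro i _
  rw [← lintegral_exp_neg_mul_expMeasure one_pos hl, ← hlaw i, lintegral_map hexp (hX i)]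

lemma measure_flightTheta_le_le (hX : ∀ k, Measurable (X k)) (hind : iIndepFun X μ)
    (hlaw : ∀ k, μ.map (X k) = expMeasure 1) {T : ℝ} (hT : 0 < T) (k : ℕ) :
    μ {ω | flightTheta X k ω ≤ T}
      ≤ ENNReal.ofReal (exp 1) * ENNReal.ofReal (1 / (1 + T⁻¹)) ^ k := by
  have hmeas := measurable_flightTheta hX k
  rw [← lintegral_exp_neg_mul_flightTheta hX hind hlaw k (inv_pos.2 hT),
    ← lintegral_const_mul _ (by fun_prop)]
  refine meas_le_lintegral₀ (by fun_prop) fun ω (hω : flightTheta X k ω ≤ T) ↦ ?_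
  rw [← ENNReal.ofReal_mul (exp_pos _).le, ← exp_add, ENNReal.one_le_ofReal,
    one_le_exp_iff, ← sub_eq_add_neg, sub_nonneg]
  exact (inv_mul_le_one₀ hT).2 hω

lemma tsum_measure_flightTheta_le_le (hX : ∀ k, Measurable (X k)) (hind : iIndepFun X μ)
    (hlaw : ∀ k, μ.map (X k) = expMeasure 1) {T : ℝ} (hT : 1 ≤ T) :
    ∑' k, μ {ω | flightTheta X k ω ≤ T} ≤ ENNReal.ofReal (2 * exp 1 * T) := by
  have hlt : 1 / (1 + T⁻¹) < 1 :=
    (div_lt_one (by positivity)).2 (lt_add_of_pos_right 1 (by positivity))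
  calc ∑' k, μ {ω | flightTheta X k ω ≤ T}
      ≤ ∑' k, ENNReal.ofReal (exp 1) * ENNReal.ofReal (1 / (1 + T⁻¹)) ^ k :=
        ENNReal.tsum_le_tsum fun k ↦ measure_flightTheta_le_le hX hind hlaw (by positivity) k
    _ = ENNReal.ofReal (exp 1) * ENNReal.ofReal (T + 1) := by
        rw [ENNReal.tsum_mul_left, ENNReal.tsum_geometric, ← ENNReal.ofReal_one,
          ← ENNReal.ofReal_sub _ (by positivity), ← ENNReal.ofReal_inv_of_pos (sub_pos.2 hlt)]
        congr 2
        field_simp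
        ring
    _ ≤ ENNReal.ofReal (2 * exp 1 * T) := by
        rw [← ENNReal.ofReal_mul (exp_pos _).le]
        exact ENNReal.ofReal_le_ofReal (by nlinarith [exp_pos 1])

lemma ae_forall_exists_lt_flightTheta (hX : ∀ k, Measurable (X k)) (hind : iIndepFun X μ)
    (hlaw : ∀ k, μ.map (X k) = expMeasure 1) : ∀ᵐ ω ∂μ, ∀ t, ∃ k, t < flightTheta X k ω := by
  have hnat : ∀ᵐ ω ∂μ, ∀ n : ℕ, ∃ k, (n + 1 : ℝ) < flightTheta X k ω :=
    ae_all_iff.2 fun n ↦ by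
      have hsum := tsum_measure_flightTheta_le_le hX hind hlaw (T := n + 1) (by simp)
      filter_upwards [ae_eventually_notMem (hsum.trans_lt ENNReal.ofReal_lt_top).ne] with ω hω
      exact hω.exists.imp fun k hk ↦ not_le.1 hk
  filter_upwards [hnat] with ω hω t
  obtain ⟨n, hn⟩ := exists_nat_gt t
  exact (hω n).imp fun k hk ↦ by linarith

lemma ae_exists_lt (hX : ∀ k, Measurable (X k)) (hind : iIndepFun X μ)
    (hlaw : ∀ k, μ.map (X k) = expMeasure 1) {a : ℝ} (ha : 0 < a) : ∀ᵐ ω ∂μ, ∃ k, X k ω < a := by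
  have hIci (n : ℕ) : μ {ω | ∀ k, a ≤ X k ω} ≤ ENNReal.ofReal (exp (-a)) ^ n :=
    calc μ {ω | ∀ k, a ≤ X k ω} ≤ μ (⋂ k ∈ Finset.range n, X k ⁻¹' Set.Ici a) :=
          measure_mono fun ω hω ↦ Set.mem_iInter₂.2 fun k _ ↦ hω k
      _ = ENNReal.ofReal (exp (-a)) ^ n := by
          rw [hind.measure_inter_preimage_eq_mul _ fun _ _ ↦ measurableSet_Ici,
            Finset.prod_eq_pow_card, Finset.card_range]
          intro k _
          rw [← Measure.map_apply (hX k) measurableSet_Ici, hlaw, expMeasure_Ici one_pos ha.le,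
            one_mul]
  simp_rw [ae_iff, not_exists, not_lt]
  have hlt : ENNReal.ofReal (exp (-a)) < 1 := by simpa using ha
  exact le_antisymm (ge_of_tendsto' (ENNReal.tendsto_pow_atTop_nhds_zero_of_lt_one hlt) hIci)
    zero_le

end ExponentialTimes

/-- Displacement of a flight process between its `a`-th and `b`-th scatterings. -/
noncomputable def flightDispl {Ω E : Type*} [AddCommMonoid E] [Module ℝ E]
    (ξ : ℕ → Ω → ℝ) (U : ℕ → Ω → E) (a b : ℕ) (ω : Ω) : E :=
  ∑ l ∈ Finset.Ico a b, ξ l ω • U l ω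

section FlightDispl

variable {Ω E : Type*} [AddCommMonoid E] [Module ℝ E] (ξ : ℕ → Ω → ℝ) (U : ℕ → Ω → E)

lemma flightDispl_add_flightDispl {a b c : ℕ} (hab : a ≤ b) (hbc : b ≤ c) (ω : Ω) :
    flightDispl ξ U a b ω + flightDispl ξ U b c ω = flightDispl ξ U a c ω :=
  Finset.sum_Ico_consecutive _ hab hbc

lemma flightDispl_self_succ (a : ℕ) (ω : Ω) : flightDispl ξ U a (a + 1) ω = ξ a ω • U a ω := by
  simp [flightDispl]

lemma flightPos_eq_flightDispl (k : ℕ) (ω : Ω) :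
    flightPos ξ U k ω = flightDispl ξ U 0 k ω := by
  rw [flightPos, flightDispl, Finset.range_eq_Ico]

lemma flightPos_succ (k : ℕ) (ω : Ω) :
    flightPos ξ U (k + 1) ω = flightPos ξ U k ω + ξ k ω • U k ω :=
  Finset.sum_range_succ _ _

end FlightDispl

section FlightSigma

variable {Ω E ι : Type*} [MeasurableSpace E]

/-- The σ-algebras generated by the individual flight lengths (indexed by `Sum.inl`) and flight
velocities (indexed by `Sum.inr`) of a family of flight processes. -/
abbrev flightComap (ξ : ι → ℕ → Ω → ℝ) (U : ι → ℕ → Ω → E) :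
    (ι × ℕ) ⊕ (ι × ℕ) → MeasurableSpace Ω :=
  Sum.elim (fun p ↦ MeasurableSpace.comap (ξ p.1 p.2) inferInstance)
    fun p ↦ MeasurableSpace.comap (U p.1 p.2) inferInstance

/-- The σ-algebra generated by the flight lengths and velocities with index in `S`. -/
abbrev flightSigma (ξ : ι → ℕ → Ω → ℝ) (U : ι → ℕ → Ω → E) (S : Set ((ι × ℕ) ⊕ (ι × ℕ))) :
    MeasurableSpace Ω :=
  ⨆ i ∈ S, flightComap ξ U i

/-- The indices of the lengths and velocities of the flights `l ∈ I` of the process `j`. -/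
def flightIndices (j : ι) (I : Set ℕ) : Set ((ι × ℕ) ⊕ (ι × ℕ)) :=
  Sum.elim id id ⁻¹' ({j} ×ˢ I)

lemma disjoint_flightIndices (j : ι) {I J : Set ℕ} (h : Disjoint I J) :
    Disjoint (flightIndices j I) (flightIndices j J) :=
  (Set.disjoint_prod.2 (.inr h)).preimage _

lemma disjoint_flightIndices_of_ne {i j : ι} (h : i ≠ j) (I J : Set ℕ) :
    Disjoint (flightIndices i I) (flightIndices j J) :=
  (Set.disjoint_prod.2 (.inl (Set.disjoint_singleton.2 h))).preimage _

lemma flightIndices_subset_compl {i j : ι} {I : Set ℕ} {m : ℕ} (h : i = j → m ∉ I) :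
    flightIndices i I ⊆ {Sum.inl (j, m)}ᶜ :=
  Set.subset_compl_singleton_iff.2 fun hm ↦ h hm.1.symm hm.2

variable {ξ : ι → ℕ → Ω → ℝ} {U : ι → ℕ → Ω → E} {S : Set ((ι × ℕ) ⊕ (ι × ℕ))} {j : ι}

lemma measurable_flightSigma_length {k : ℕ} (h : Sum.inl (j, k) ∈ S) :
    Measurable[flightSigma ξ U S] (ξ j k) :=
  Measurable.of_comap_le (le_iSup₂_of_le (f := fun i (_ : i ∈ S) ↦ flightComap ξ U i) _ h le_rfl)

lemma measurable_flightSigma_velocity {k : ℕ} (h : Sum.inr (j, k) ∈ S) :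
    Measurable[flightSigma ξ U S] (U j k) :=
  Measurable.of_comap_le (le_iSup₂_of_le (f := fun i (_ : i ∈ S) ↦ flightComap ξ U i) _ h le_rfl)

lemma measurable_flightSigma_flightTheta {k : ℕ} (h : flightIndices j (Set.Ico 0 k) ⊆ S) :
    Measurable[flightSigma ξ U S] (flightTheta (ξ j) k) :=
  Finset.measurable_fun_sum _ fun l hl ↦ measurable_flightSigma_length
    (h (by simpa [flightIndices] using hl))

lemma measurable_flightSigma_flightDispl [NormedAddCommGroup E] [NormedSpace ℝ E] [BorelSpace E]
    [SecondCountableTopology E] {a b : ℕ} (h : flightIndices j (Set.Ico a b) ⊆ S) :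
    Measurable[flightSigma ξ U S] (flightDispl (ξ j) (U j) a b) :=
  Finset.measurable_fun_sum _ fun l hl ↦
    (measurable_flightSigma_length (h (by simpa [flightIndices] using hl))).smul
      (measurable_flightSigma_velocity (h (by simpa [flightIndices] using hl)))

lemma measurable_flightSigma_flightPos [NormedAddCommGroup E] [NormedSpace ℝ E] [BorelSpace E]
    [SecondCountableTopology E] {k : ℕ} (h : flightIndices j (Set.Ico 0 k) ⊆ S) :
    Measurable[flightSigma ξ U S] (flightPos (ξ j) (U j) k) := by
  rw [funext (flightPos_eq_flightDispl (ξ j) (U j) k)]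
  exact measurable_flightSigma_flightDispl h

end FlightSigma

/-- A family of independent flight processes on a probability space, with initial unit
velocities `v`, unit-rate exponential flight lengths `ξ`, and flight velocities `U` which are
distributed according to the uniform direction `σ` after the first flight. -/
structure IsFlightFamily {Ω E ι : Type*} [MeasurableSpace Ω] [NormedAddCommGroup E]
    [NormedSpace ℝ E] [MeasurableSpace E] (μ : Measure Ω) (σ : Measure E) (v : ι → E)
    (ξ : ι → ℕ → Ω → ℝ) (U : ι → ℕ → Ω → E) : Prop where
  isProbabilityMeasure : IsProbabilityMeasure μ
  isUniformOnSphere : IsUniformOnSphere σ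
  norm_eq_one : ∀ j, ‖v j‖ = 1
  measurable_length : ∀ j k, Measurable (ξ j k)
  measurable_velocity : ∀ j k, Measurable (U j k)
  velocity_zero : ∀ j, U j 0 = fun _ ↦ v j
  iIndep_flightComap : iIndep (flightComap ξ U) μ
  map_length : ∀ j k, μ.map (ξ j k) = expMeasure 1
  map_velocity : ∀ j k, 1 ≤ k → μ.map (U j k) = σ

namespace IsFlightFamily

variable {Ω E ι : Type*} [MeasurableSpace Ω] [NormedAddCommGroup E] [NormedSpace ℝ E]
  [MeasurableSpace E] {μ : Measure Ω} {σ : Measure E} {v : ι → E} {ξ : ι → ℕ → Ω → ℝ}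
  {U : ι → ℕ → Ω → E}

lemma flightComap_le (h : IsFlightFamily μ σ v ξ U) (i : (ι × ℕ) ⊕ (ι × ℕ)) :
    flightComap ξ U i ≤ ‹MeasurableSpace Ω› := by
  rcases i with p | p
  exacts [(h.measurable_length p.1 p.2).comap_le, (h.measurable_velocity p.1 p.2).comap_le]

lemma flightSigma_le (h : IsFlightFamily μ σ v ξ U) (S : Set ((ι × ℕ) ⊕ (ι × ℕ))) :
    flightSigma ξ U S ≤ ‹MeasurableSpace Ω› :=
  iSup₂_le fun i _ ↦ h.flightComap_le i

lemma indepFun (h : IsFlightFamily μ σ v ξ U) {γ δ : Type*} [MeasurableSpace γ]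
    [MeasurableSpace δ] {X : Ω → γ} {Y : Ω → δ} {S T : Set ((ι × ℕ) ⊕ (ι × ℕ))}
    (hX : Measurable[flightSigma ξ U S] X) (hY : Measurable[flightSigma ξ U T] Y)
    (hST : Disjoint S T) : IndepFun X Y μ :=
  (IndepFun_iff_Indep _ _ _).2 <| indep_of_indep_of_le_left (indep_of_indep_of_le_right
    (indep_iSup_of_disjoint h.flightComap_le h.iIndep_flightComap hST) hY.comap_le) hX.comap_le

lemma iIndepFun_length (h : IsFlightFamily μ σ v ξ U) (j : ι) : iIndepFun (ξ j) μ :=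
  (iIndepFun_iff_iIndep _ _ _).2 <| h.iIndep_flightComap.precomp (g := fun k ↦ .inl (j, k))
    fun _ _ hkl ↦ congr_arg Prod.snd (Sum.inl_injective hkl)

lemma ae_norm_velocity (h : IsFlightFamily μ σ v ξ U) (j : ι) (k : ℕ) :
    ∀ᵐ ω ∂μ, ‖U j k ω‖ = 1 := by
  rcases k.eq_zero_or_pos with rfl | hk
  · exact .of_forall fun ω ↦ by rw [h.velocity_zero, h.norm_eq_one]
  · have hnorm := h.isUniformOnSphere.ae_norm_eq_one
    rw [← h.map_velocity j k hk] at hnorm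
    exact ae_of_ae_map (h.measurable_velocity j k).aemeasurable hnorm

variable [BorelSpace E] [SecondCountableTopology E]

lemma measurable_flightPos (h : IsFlightFamily μ σ v ξ U) (j : ι) (k : ℕ) :
    Measurable (flightPos (ξ j) (U j) k) :=
  (measurable_flightSigma_flightPos subset_rfl).mono (h.flightSigma_le _) le_rfl

lemma measurable_flightDispl (h : IsFlightFamily μ σ v ξ U) (j : ι) (a b : ℕ) :
    Measurable (flightDispl (ξ j) (U j) a b) :=
  (measurable_flightSigma_flightDispl subset_rfl).mono (h.flightSigma_le _) le_rfl

lemma map_smul_velocity (h : IsFlightFamily μ σ v ξ U) (j : ι) {k : ℕ} (hk : 1 ≤ k) :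
    μ.map (fun ω ↦ ξ j k ω • U j k ω) = ((expMeasure 1).prod σ).map fun p ↦ p.1 • p.2 := by
  have := h.isProbabilityMeasure
  have hind : IndepFun (ξ j k) (U j k) μ := h.indepFun (S := {.inl (j, k)}) (T := {.inr (j, k)})
    (measurable_flightSigma_length rfl) (measurable_flightSigma_velocity rfl) (by simp)
  have hξ := h.measurable_length j k
  have hU := h.measurable_velocity j k
  rw [← h.map_length j k, ← h.map_velocity j k hk, ← (indepFun_iff_map_prod_eq_prod_map_map
    hξ.aemeasurable hU.aemeasurable).1 hind, Measure.map_map (by fun_prop) (hξ.prodMk hU)]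
  rfl

end IsFlightFamily

section Concentration

variable {Ω E : Type*} [MeasurableSpace Ω] {μ : Measure Ω} [IsFiniteMeasure μ]
  [NormedAddCommGroup E] [InnerProductSpace ℝ E] [MeasurableSpace E] [BorelSpace E]
  [SecondCountableTopology E]

lemma measure_smul_add_smul_add_mem_ball_le {X : Ω → ℝ × ℝ} {V₁ V₂ W : Ω → E}
    (hX : Measurable X) (hXμ : μ.map X = (expMeasure 1).prod (expMeasure 1))
    (hV₁ : Measurable V₁) (hV₂ : Measurable V₂) (hW : Measurable W)
    (hi : IndepFun (fun ω ↦ (V₁ ω, V₂ ω, W ω)) X μ) (hV₁1 : ∀ᵐ ω ∂μ, ‖V₁ ω‖ = 1)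
    (hV₂1 : ∀ᵐ ω ∂μ, ‖V₂ ω‖ = 1) (y : E) {ε : ℝ} (hε : 0 < ε) :
    μ {ω | (X ω).1 • V₁ ω + (X ω).2 • V₂ ω + W ω ∈ Metric.ball y ε}
      ≤ ENNReal.ofReal (4 * ε ^ 2) *
        ∫⁻ ω, (ENNReal.ofReal √(1 - ⟪V₁ ω, V₂ ω⟫_ℝ ^ 2))⁻¹ ∂μ := by
  have hexp : expMeasure 1 ≤ volume := by simpa using expMeasure_le_smul_volume one_pos
  have := isProbabilityMeasure_expMeasure one_pos
  have hB : MeasurableSet {p : (E × E × E) × (ℝ × ℝ) |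
      p.2.1 • p.1.1 + p.2.2 • p.1.2.1 + p.1.2.2 ∈ Metric.ball y ε} :=
    measurableSet_ball.preimage (f := fun p : (E × E × E) × (ℝ × ℝ) ↦
      p.2.1 • p.1.1 + p.2.2 • p.1.2.1 + p.1.2.2) (by fun_prop)
  calc μ {ω | (X ω).1 • V₁ ω + (X ω).2 • V₂ ω + W ω ∈ Metric.ball y ε}
      = ∫⁻ ω, ((expMeasure 1).prod (expMeasure 1))
          {p | p.1 • V₁ ω + p.2 • V₂ ω ∈ Metric.ball (y - W ω) ε} ∂μ := by
        rw [← hXμ]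
        refine (measure_prodMk_mem_of_indepFun (by fun_prop) hX hi hB).trans ?_
        simp only [Set.preimage, Set.mem_ofPred_eq, Metric.mem_ball, dist_eq_norm,
          sub_sub_eq_add_sub]
    _ ≤ ∫⁻ ω, ENNReal.ofReal (4 * ε ^ 2) *
          (ENNReal.ofReal √(1 - ⟪V₁ ω, V₂ ω⟫_ℝ ^ 2))⁻¹ ∂μ := by
        refine lintegral_mono_ae ?_
        filter_upwards [hV₁1, hV₂1] with ω hω₁ hω₂
        exact prod_smul_add_smul_mem_ball_le hexp hexp hω₁ hω₂ _ hε
    _ = _ := lintegral_const_mul _ (by fun_prop)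

end Concentration

/-- A bound for the probability that the displacement over `n + 1` successive flights lies in a
given ball of radius `ε`. The characteristic function of the displacement is only known to be
integrable for `4 ≤ n`; for `0 < n < 4` the bound comes from the first two flights. -/
noncomputable def flightConcBound (ε : ℝ) (n : ℕ) : ℝ≥0∞ :=
  if n < 4 then ENNReal.ofReal (4 * π * ε ^ 2) else ENNReal.ofReal (ε ^ 3) * flightCharNorm n

/-- The constant in the bounds for the sums of `flightConcBound ε n` over `n`. -/
noncomputable def flightConcConst : ℝ :=
  12 * π + 4 * (∑' n, flightCharNorm (n + 4)).toReal

lemma flightConcConst_pos : 0 < flightConcConst := by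
  unfold flightConcConst
  positivity

lemma tsum_flightConcBound_add_four {ε : ℝ} (hε : 0 ≤ ε) :
    ∑' n, flightConcBound ε (n + 4)
      = ENNReal.ofReal (ε ^ 3 * (∑' n, flightCharNorm (n + 4)).toReal) := by
  have hterm (n : ℕ) :
      flightConcBound ε (n + 4) = ENNReal.ofReal (ε ^ 3) * flightCharNorm (n + 4) :=
    if_neg (by omega)
  simp_rw [hterm]
  rw [ENNReal.tsum_mul_left, ENNReal.ofReal_mul (by positivity),
    ENNReal.ofReal_toReal tsum_flightCharNorm_lt_top.ne]

lemma tsum_flightConcBound_add_four_le {ε : ℝ} (hε : 0 ≤ ε) :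
    ∑' n, flightConcBound ε (n + 4) ≤ ENNReal.ofReal (flightConcConst * ε ^ 3) := by
  rw [tsum_flightConcBound_add_four hε, mul_comm]
  refine ENNReal.ofReal_le_ofReal (mul_le_mul_of_nonneg_right ?_ (by positivity))
  rw [flightConcConst]
  linarith [pi_pos, ENNReal.toReal_nonneg (a := ∑' n, flightCharNorm (n + 4))]

lemma tsum_flightConcBound_succ_le {ε : ℝ} (hε : 0 ≤ ε) (hε4 : ε ≤ 4) :
    ∑' n, flightConcBound ε (n + 1) ≤ ENNReal.ofReal (flightConcConst * ε ^ 2) := by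
  have hterm {n : ℕ} (hn : n < 4) : flightConcBound ε n = ENNReal.ofReal (4 * π * ε ^ 2) :=
    if_pos hn
  rw [← ENNReal.summable.sum_add_tsum_nat_add' (k := 3), Finset.sum_range_succ,
    Finset.sum_range_succ, Finset.sum_range_one, hterm (by omega), hterm (by omega),
    hterm (by omega), tsum_flightConcBound_add_four hε]
  rw [← ENNReal.ofReal_add (by positivity) (by positivity),
    ← ENNReal.ofReal_add (by positivity) (by positivity),
    ← ENNReal.ofReal_add (by positivity) (by positivity)]
  have hcube : ε ^ 3 ≤ 4 * ε ^ 2 := by nlinarith [sq_nonneg ε]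
  refine ENNReal.ofReal_le_ofReal ?_
  rw [flightConcConst]
  nlinarith [mul_le_mul_of_nonneg_right hcube
    (ENNReal.toReal_nonneg (a := ∑' n, flightCharNorm (n + 4)))]

namespace IsFlightFamily

variable {Ω ι : Type*} [MeasurableSpace Ω] {μ : Measure Ω}
  {σ : Measure (EuclideanSpace ℝ (Fin 3))} {v : ι → EuclideanSpace ℝ (Fin 3)}
  {ξ : ι → ℕ → Ω → ℝ} {U : ι → ℕ → Ω → EuclideanSpace ℝ (Fin 3)}

lemma lintegral_inv_sqrt_one_sub_inner_sq_le (h : IsFlightFamily μ σ v ξ U) (j : ι) (a : ℕ) :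
    ∫⁻ ω, (ENNReal.ofReal √(1 - ⟪U j a ω, U j (a + 1) ω⟫_ℝ ^ 2))⁻¹ ∂μ ≤ ENNReal.ofReal π := by
  have := h.isProbabilityMeasure
  have hind : IndepFun (U j a) (U j (a + 1)) μ := h.indepFun (S := {.inr (j, a)})
    (T := {.inr (j, a + 1)}) (measurable_flightSigma_velocity rfl)
    (measurable_flightSigma_velocity rfl) (by simp)
  calc ∫⁻ ω, (ENNReal.ofReal √(1 - ⟪U j a ω, U j (a + 1) ω⟫_ℝ ^ 2))⁻¹ ∂μ
      = ∫⁻ ω, ∫⁻ u, (ENNReal.ofReal √(1 - ⟪U j a ω, u⟫_ℝ ^ 2))⁻¹ ∂σ ∂μ := by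
        rw [← h.map_velocity j (a + 1) (by omega)]
        exact lintegral_prodMk_of_indepFun (h.measurable_velocity j a)
          (h.measurable_velocity j (a + 1)) hind
          (f := fun p ↦ (ENNReal.ofReal √(1 - ⟪p.1, p.2⟫_ℝ ^ 2))⁻¹) (by fun_prop)
    _ ≤ ∫⁻ _, ENNReal.ofReal π ∂μ := lintegral_mono_ae <| (h.ae_norm_velocity j a).mono
        fun ω hω ↦ h.isUniformOnSphere.lintegral_inv_sqrt_one_sub_inner_sq_le hω
    _ = ENNReal.ofReal π := by simp

lemma map_length_prodMk_length (h : IsFlightFamily μ σ v ξ U) {i j : ι} {k l : ℕ}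
    (hne : (i, k) ≠ (j, l)) :
    μ.map (fun ω ↦ (ξ i k ω, ξ j l ω)) = (expMeasure 1).prod (expMeasure 1) := by
  have := h.isProbabilityMeasure
  have hind : IndepFun (ξ i k) (ξ j l) μ := h.indepFun (S := {.inl (i, k)}) (T := {.inl (j, l)})
    (measurable_flightSigma_length rfl) (measurable_flightSigma_length rfl) (by simpa using hne)
  rw [(indepFun_iff_map_prod_eq_prod_map_map (h.measurable_length i k).aemeasurable
    (h.measurable_length j l).aemeasurable).1 hind, h.map_length, h.map_length]

lemma measure_flightDispl_mem_ball_le_sq (h : IsFlightFamily μ σ v ξ U) (j : ι) {a b : ℕ}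
    (hab : a + 2 ≤ b) (y : EuclideanSpace ℝ (Fin 3)) {ε : ℝ} (hε : 0 < ε) :
    μ {ω | flightDispl (ξ j) (U j) a b ω ∈ Metric.ball y ε}
      ≤ ENNReal.ofReal (4 * π * ε ^ 2) := by
  have := h.isProbabilityMeasure
  set S : Set ((ι × ℕ) ⊕ (ι × ℕ)) := {.inl (j, a), .inl (j, a + 1)}
  have hS : S ⊆ flightIndices j (Set.Ico a (a + 2)) := by
    simp [S, flightIndices, Set.insert_subset_iff]
  have hrest : flightIndices j (Set.Ico (a + 2) b) ⊆ Sᶜ :=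
    ((disjoint_flightIndices j Set.Ico_disjoint_Ico_same).mono_left hS).subset_compl_left
  have hind := h.indepFun
    (X := fun ω ↦ (U j a ω, U j (a + 1) ω, flightDispl (ξ j) (U j) (a + 2) b ω))
    (Y := fun ω ↦ (ξ j a ω, ξ j (a + 1) ω)) (S := Sᶜ) (T := S)
    ((measurable_flightSigma_velocity (by simp [S])).prodMk
      ((measurable_flightSigma_velocity (by simp [S])).prodMk
        (measurable_flightSigma_flightDispl hrest)))
    ((measurable_flightSigma_length (by simp [S])).prodMk
      (measurable_flightSigma_length (by simp [S]))) disjoint_compl_left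
  have hsplit (ω : Ω) : flightDispl (ξ j) (U j) a b ω = ξ j a ω • U j a ω +
      ξ j (a + 1) ω • U j (a + 1) ω + flightDispl (ξ j) (U j) (a + 2) b ω := by
    rw [← flightDispl_self_succ, ← flightDispl_self_succ, flightDispl_add_flightDispl,
      flightDispl_add_flightDispl] <;> omega
  simp_rw [hsplit]
  refine (measure_smul_add_smul_add_mem_ball_le
    ((h.measurable_length j a).prodMk (h.measurable_length j (a + 1)))
    (h.map_length_prodMk_length (by simp)) (h.measurable_velocity j a)
    (h.measurable_velocity j (a + 1)) (h.measurable_flightDispl j _ _) hind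
    (h.ae_norm_velocity j a) (h.ae_norm_velocity j (a + 1)) y hε).trans ?_
  calc _ ≤ ENNReal.ofReal (4 * ε ^ 2) * ENNReal.ofReal π := by
        gcongr
        exact h.lintegral_inv_sqrt_one_sub_inner_sq_le j a
    _ = _ := by rw [← ENNReal.ofReal_mul (by positivity), mul_right_comm]

lemma norm_charFun_map_flightDispl_le (h : IsFlightFamily μ σ v ξ U) (j : ι) (a n : ℕ)
    {t : EuclideanSpace ℝ (Fin 3)} (ht : t ≠ 0) :
    ‖charFun (μ.map (flightDispl (ξ j) (U j) a (a + 1 + n))) t‖ ≤ (arctan ‖t‖ / ‖t‖) ^ n := by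
  have := h.isProbabilityMeasure
  have hmeas := h.measurable_flightDispl j
  induction n with
  | zero =>
    have := Measure.isProbabilityMeasure_map (hmeas a (a + 1)).aemeasurable (μ := μ)
    simpa using norm_charFun_le_one t
  | succ n ih =>
    have hsplit : flightDispl (ξ j) (U j) a (a + 1 + (n + 1)) =
        flightDispl (ξ j) (U j) a (a + 1 + n) +
          flightDispl (ξ j) (U j) (a + 1 + n) (a + 1 + n + 1) :=
      funext fun ω ↦ (flightDispl_add_flightDispl _ _ (by omega) (by omega) ω).symm
    have hind := h.indepFun (measurable_flightSigma_flightDispl (ξ := ξ) (U := U) (j := j)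
      subset_rfl) (measurable_flightSigma_flightDispl subset_rfl) (disjoint_flightIndices j
        (Set.Ico_disjoint_Ico_same (a := a) (b := a + 1 + n) (c := a + 1 + n + 1)))
    rw [hsplit, hind.charFun_map_add_eq_mul (hmeas _ _).aemeasurable (hmeas _ _).aemeasurable,
      funext (flightDispl_self_succ (ξ j) (U j) (a + 1 + n)), Pi.mul_apply,
      h.map_smul_velocity j (by omega), h.isUniformOnSphere.charFun_map_smul ht, norm_mul,
      Complex.norm_of_nonneg (arctan_div_nonneg _), pow_succ]
    exact mul_le_mul_of_nonneg_right ih (arctan_div_nonneg _)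

lemma measure_flightDispl_mem_ball_le (h : IsFlightFamily μ σ v ξ U) (j : ι) (a : ℕ) {n : ℕ}
    (hn : 1 ≤ n) (y : EuclideanSpace ℝ (Fin 3)) {ε : ℝ} (hε : 0 < ε) :
    μ {ω | flightDispl (ξ j) (U j) a (a + 1 + n) ω ∈ Metric.ball y ε} ≤ flightConcBound ε n := by
  have := h.isProbabilityMeasure
  rw [flightConcBound]
  split_ifs with hn4
  · exact h.measure_flightDispl_mem_ball_le_sq j (by omega) y hε
  · have hmeas := h.measurable_flightDispl j a (a + 1 + n)
    calc μ {ω | flightDispl (ξ j) (U j) a (a + 1 + n) ω ∈ Metric.ball y ε}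
        = μ.map (flightDispl (ξ j) (U j) a (a + 1 + n)) (Metric.ball y ε) :=
          (Measure.map_apply hmeas measurableSet_ball).symm
      _ ≤ ENNReal.ofReal (ε ^ 3) *
            ∫⁻ t, ‖charFun (μ.map (flightDispl (ξ j) (U j) a (a + 1 + n))) t‖ₑ := by
          simpa using measure_ball_le_lintegral_charFun
            (μ.map (flightDispl (ξ j) (U j) a (a + 1 + n))) y hε
      _ ≤ ENNReal.ofReal (ε ^ 3) * flightCharNorm n := by
          gcongr
          refine lintegral_mono_ae ?_
          filter_upwards [Measure.ae_ne volume 0] with t ht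
          rw [← ENNReal.ofReal_pow (arctan_div_nonneg _), ← ofReal_norm]
          exact ENNReal.ofReal_le_ofReal (h.norm_charFun_map_flightDispl_le j a n ht)

end IsFlightFamily

lemma tsum_tsum_le_of_le_mul {q : ℕ → ℕ → ℝ≥0∞} {b p : ℕ → ℝ≥0∞} {c : ℝ≥0∞} (hp : ∀ k, p k ≤ 1)
    (h00 : q 0 0 ≤ c) (hleft : ∀ n k, q (n + 1) k ≤ p k * b n) (hright : ∀ m n, q m (n + 1) ≤ b n)
    (N : ℕ) :
    ∑' m, ∑' k, q m k ≤ c + (N + 2) * ∑' n, b n + (∑' n, b (n + N)) * ∑' k, p k := by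
  have hrow (m : ℕ) : ∑' k, q m k ≤ q m 0 + ∑' n, b n := by
    rw [tsum_eq_zero_add' ENNReal.summable]
    gcongr with n
    exact hright m n
  have hcolumn : ∑ m ∈ Finset.range (N + 1), q m 0 ≤ ∑' n, b n + c := by
    rw [Finset.sum_range_succ']
    refine add_le_add (le_trans ?_ (ENNReal.sum_le_tsum (Finset.range N))) h00
    exact Finset.sum_le_sum fun n _ ↦ (hleft n 0).trans (mul_le_of_le_one_left' (hp 0))
  have htail : ∑' m, ∑' k, q (m + (N + 1)) k ≤ (∑' n, b (n + N)) * ∑' k, p k := by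
    simp_rw [← ENNReal.tsum_mul_right, ← ENNReal.tsum_mul_left]
    gcongr with n k
    exact (hleft (n + N) k).trans_eq (mul_comm _ _)
  calc ∑' m, ∑' k, q m k
      = ∑ m ∈ Finset.range (N + 1), ∑' k, q m k + ∑' m, ∑' k, q (m + (N + 1)) k :=
        (ENNReal.summable.sum_add_tsum_nat_add' (f := fun m ↦ ∑' k, q m k)).symm
    _ ≤ ∑ m ∈ Finset.range (N + 1), (q m 0 + ∑' n, b n) + (∑' n, b (n + N)) * ∑' k, p k := by
        gcongr with m
        exact hrow m
    _ ≤ (∑' n, b n + c + (N + 1) * ∑' n, b n) + (∑' n, b (n + N)) * ∑' k, p k := by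
        rw [Finset.sum_add_distrib, Finset.sum_const, Finset.card_range, nsmul_eq_mul]
        push_cast
        gcongr
    _ = _ := by ring

lemma measure_iUnion_iUnion_le_tsum {Ω : Type*} [MeasurableSpace Ω] (μ : Measure Ω)
    (s : ℕ → ℕ → Set Ω) : μ (⋃ k, ⋃ n, s k n) ≤ ∑' k, ∑' n, μ (s k n) :=
  (measure_iUnion_le _).trans (ENNReal.tsum_le_tsum fun _ ↦ measure_iUnion_le _)

section Interference

variable {Ω E : Type*} [NormedAddCommGroup E] [NormedSpace ℝ E]

/-- The segment traversed by a flight process during its `m`-th flight. -/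
noncomputable def flightSegment (ξ : ℕ → Ω → ℝ) (U : ℕ → Ω → E) (m : ℕ) (ω : Ω) : Set E :=
  segment ℝ (flightPos ξ U m ω) (flightPos ξ U (m + 1) ω)

/-- The event that a non-adjacent flight of the process comes within distance `ρ` of one of its
scattering points, where the earlier of the flight and the scattering starts by time `T`. -/
def selfInterference (ξ : ℕ → Ω → ℝ) (U : ℕ → Ω → E) (ρ T : ℝ) : Set Ω :=
  {ω | ∃ k m, (k < m ∨ m + 2 ≤ k) ∧ flightTheta ξ (min k m) ω ≤ T ∧
    flightPos ξ U k ω ∈ Metric.thickening ρ (flightSegment ξ U m ω)}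

/-- The event that the first process comes, at any time, within distance `ρ` of a scattering
point, reached by time `T`, of the second process. -/
def pairInterference (ξ : ℕ → Ω → ℝ) (U : ℕ → Ω → E) (ξ' : ℕ → Ω → ℝ) (U' : ℕ → Ω → E)
    (ρ T : ℝ) : Set Ω :=
  {ω | ∃ m k, flightTheta ξ' (k + 1) ω ≤ T ∧
    flightPos ξ' U' (k + 1) ω ∈ Metric.thickening ρ (flightSegment ξ U m ω)}

lemma selfInterference_subset (ξ : ℕ → Ω → ℝ) (U : ℕ → Ω → E) (ρ T : ℝ) :
    selfInterference ξ U ρ T ⊆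
      (⋃ k, ⋃ n, {ω | flightTheta ξ k ω ≤ T ∧
        flightPos ξ U k ω ∈ Metric.thickening ρ (flightSegment ξ U (k + 1 + n) ω)}) ∪
      ⋃ m, ⋃ n, {ω | flightTheta ξ m ω ≤ T ∧
        flightPos ξ U (m + 1 + (n + 1)) ω ∈ Metric.thickening ρ (flightSegment ξ U m ω)} := by
  rintro ω ⟨k, m, hkm | hmk, hT, hω⟩
  · obtain ⟨n, rfl⟩ := Nat.exists_eq_add_of_le (Nat.succ_le_of_lt hkm)
    rw [min_eq_left (by omega)] at hT
    exact .inl (Set.mem_iUnion₂.2 ⟨k, n, hT, hω⟩)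
  · obtain ⟨n, rfl⟩ := Nat.exists_eq_add_of_le hmk
    rw [min_eq_right (by omega)] at hT
    rw [show m + 2 + n = m + 1 + (n + 1) by omega] at hω
    exact .inr (Set.mem_iUnion₂.2 ⟨m, n, hT, hω⟩)

end Interference

namespace IsFlightFamily

section

variable {Ω E ι : Type*} [MeasurableSpace Ω] [NormedAddCommGroup E] [NormedSpace ℝ E]
  [MeasurableSpace E] [BorelSpace E] [SecondCountableTopology E] {μ : Measure Ω} {σ : Measure E}
  {v : ι → E} {ξ : ι → ℕ → Ω → ℝ} {U : ι → ℕ → Ω → E}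

lemma measure_mem_thickening_segment_add_le (h : IsFlightFamily μ σ v ξ U) (j : ι) (m : ℕ)
    {V P Q : Ω → E} {θ : Ω → ℝ} (hVm : Measurable[flightSigma ξ U {.inl (j, m)}ᶜ] V)
    (hPQ : Measurable[flightSigma ξ U {.inl (j, m)}ᶜ] (P - Q))
    (hθ : Measurable[flightSigma ξ U {.inl (j, m)}ᶜ] θ) (hV : ∀ᵐ ω ∂μ, ‖V ω‖ = 1) (T : ℝ) {ρ : ℝ}
    (hρ : 0 < ρ) (hρ2 : ρ ≤ 2) :
    μ {ω | θ ω ≤ T ∧ P ω ∈ Metric.thickening ρ (segment ℝ (Q ω) (Q ω + ξ j m ω • V ω))}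
      ≤ ENNReal.ofReal (4 / ρ) *
        μ {ω | θ ω ≤ T ∧ dist (Q ω + ξ j m ω • V ω) (P ω) < 2 * ρ} := by
  have := h.isProbabilityMeasure
  have hVPQ := hVm.prodMk (hPQ.prodMk hθ)
  have hbound := measure_mem_thickening_segment_le (A := Set.Iic T)
    (h.measurable_length j m) (h.map_length j m) hV (hVPQ.mono (h.flightSigma_le _) le_rfl)
    measurableSet_Iic (h.indepFun (T := {.inl (j, m)}) hVPQ (measurable_flightSigma_length rfl)
      disjoint_compl_left) hρ hρ2
  simpa only [mem_thickening_segment_add_iff, Metric.mem_ball, dist_eq_norm, Pi.sub_apply,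
    Set.mem_Iic, sub_sub_eq_add_sub, add_comm] using hbound

lemma measure_mem_thickening_flightSegment_le (h : IsFlightFamily μ σ v ξ U) {i j : ι} {k m : ℕ}
    (hij : i = j → k ≤ m) (T : ℝ) {ρ : ℝ} (hρ : 0 < ρ) (hρ2 : ρ ≤ 2) :
    μ {ω | flightTheta (ξ j) k ω ≤ T ∧
        flightPos (ξ j) (U j) k ω ∈ Metric.thickening ρ (flightSegment (ξ i) (U i) m ω)}
      ≤ ENNReal.ofReal (4 / ρ) * μ {ω | flightTheta (ξ j) k ω ≤ T ∧
        dist (flightPos (ξ i) (U i) (m + 1) ω) (flightPos (ξ j) (U j) k ω) < 2 * ρ} := by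
  have hk : flightIndices j (Set.Ico 0 k) ⊆ {.inl (i, m)}ᶜ :=
    flightIndices_subset_compl fun hji hm ↦ (hij hji.symm).not_gt hm.2
  have hm : flightIndices i (Set.Ico 0 m) ⊆ {.inl (i, m)}ᶜ :=
    flightIndices_subset_compl fun _ hm ↦ lt_irrefl m hm.2
  simp only [flightSegment, flightPos_succ]
  exact h.measure_mem_thickening_segment_add_le i m (measurable_flightSigma_velocity (by simp))
    ((measurable_flightSigma_flightPos hk).sub (measurable_flightSigma_flightPos hm))
    (measurable_flightSigma_flightTheta hk) (h.ae_norm_velocity i m) T hρ hρ2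

/- Time reversal: the `m`-th flight is traversed backwards from its end, which makes the
displacement to the later scattering independent of the length of the flight. -/
lemma measure_mem_thickening_flightSegment_le_of_lt (h : IsFlightFamily μ σ v ξ U) (j : ι)
    {k m : ℕ} (hmk : m + 1 ≤ k) (T : ℝ) {ρ : ℝ} (hρ : 0 < ρ) (hρ2 : ρ ≤ 2) :
    μ {ω | flightTheta (ξ j) m ω ≤ T ∧
        flightPos (ξ j) (U j) k ω ∈ Metric.thickening ρ (flightSegment (ξ j) (U j) m ω)}
      ≤ ENNReal.ofReal (4 / ρ) * μ {ω | flightTheta (ξ j) m ω ≤ T ∧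
        dist (flightPos (ξ j) (U j) m ω) (flightPos (ξ j) (U j) k ω) < 2 * ρ} := by
  have hm : flightIndices j (Set.Ico 0 m) ⊆ {.inl (j, m)}ᶜ :=
    flightIndices_subset_compl fun _ hm ↦ lt_irrefl m hm.2
  have hk : flightIndices j (Set.Ico (m + 1) k) ⊆ {.inl (j, m)}ᶜ :=
    flightIndices_subset_compl fun _ hm ↦ (Nat.lt_succ_self m).not_ge hm.1
  have hstart (ω : Ω) : flightPos (ξ j) (U j) m ω =
      flightPos (ξ j) (U j) (m + 1) ω + ξ j m ω • (-U j m) ω := by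
    rw [flightPos_succ, Pi.neg_apply, smul_neg, add_neg_cancel_right]
  have hdispl : flightPos (ξ j) (U j) k - flightPos (ξ j) (U j) (m + 1) =
      flightDispl (ξ j) (U j) (m + 1) k := funext fun ω ↦ by
    rw [Pi.sub_apply, flightPos_eq_flightDispl, flightPos_eq_flightDispl,
      ← flightDispl_add_flightDispl _ _ (Nat.zero_le _) hmk, add_sub_cancel_left]
  simp only [flightSegment, segment_symm ℝ (flightPos (ξ j) (U j) m _)]
  simp only [hstart]
  refine h.measure_mem_thickening_segment_add_le j m
    (measurable_flightSigma_velocity (by simp)).neg (hdispl ▸ measurable_flightSigma_flightDispl hk)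
    (measurable_flightSigma_flightTheta hm) ?_ T hρ hρ2
  simpa using h.ae_norm_velocity j m

end

variable {Ω ι : Type*} [MeasurableSpace Ω] {μ : Measure Ω}
  {σ : Measure (EuclideanSpace ℝ (Fin 3))} {v : ι → EuclideanSpace ℝ (Fin 3)}
  {ξ : ι → ℕ → Ω → ℝ} {U : ι → ℕ → Ω → EuclideanSpace ℝ (Fin 3)}

lemma measure_dist_flightPos_self_lt_le (h : IsFlightFamily μ σ v ξ U) (j : ι) (k : ℕ) {n : ℕ}
    (hn : 1 ≤ n) (T : ℝ) {ε : ℝ} (hε : 0 < ε) :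
    μ {ω | flightTheta (ξ j) k ω ≤ T ∧
        dist (flightPos (ξ j) (U j) k ω) (flightPos (ξ j) (U j) (k + 1 + n) ω) < ε}
      ≤ μ {ω | flightTheta (ξ j) k ω ≤ T} * flightConcBound ε n := by
  have := h.isProbabilityMeasure
  have hdist (ω : Ω) : dist (flightPos (ξ j) (U j) k ω) (flightPos (ξ j) (U j) (k + 1 + n) ω) =
      dist (flightDispl (ξ j) (U j) k (k + 1 + n) ω) 0 := by
    rw [flightPos_eq_flightDispl, flightPos_eq_flightDispl,
      ← flightDispl_add_flightDispl _ _ k.zero_le (show k ≤ k + 1 + n by omega), dist_comm,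
      dist_self_add_left, dist_zero_right]
  have hind := h.indepFun (measurable_flightSigma_flightTheta (j := j) (k := k) subset_rfl)
    (measurable_flightSigma_flightDispl (a := k) (b := k + 1 + n) subset_rfl)
    (disjoint_flightIndices j Set.Ico_disjoint_Ico_same)
  simp only [hdist]
  exact measure_inter_prodMk_mem_le_of_indepFun (measurable_flightTheta (h.measurable_length j) k)
    (h.measurable_flightDispl j k _) hind measurableSet_Iic
    (measurable_snd (measurableSet_ball (x := 0) (ε := ε)))
    fun _ ↦ h.measure_flightDispl_mem_ball_le j k hn 0 hε

lemma measure_flightPos_mem_ball_le (h : IsFlightFamily μ σ v ξ U) (j : ι) {n : ℕ} (hn : 1 ≤ n)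
    (y : EuclideanSpace ℝ (Fin 3)) {ε : ℝ} (hε : 0 < ε) :
    μ {ω | flightPos (ξ j) (U j) (n + 1) ω ∈ Metric.ball y ε} ≤ flightConcBound ε n := by
  simp only [flightPos_eq_flightDispl, add_comm n]
  simpa using h.measure_flightDispl_mem_ball_le j 0 hn y hε

lemma measure_dist_flightPos_lt_le (h : IsFlightFamily μ σ v ξ U) {i j : ι} (hij : i ≠ j) (k : ℕ)
    {n : ℕ} (hn : 1 ≤ n) {A : Set ℝ} (hA : MeasurableSet A) {ε : ℝ} (hε : 0 < ε) :
    μ {ω | flightTheta (ξ j) k ω ∈ A ∧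
        dist (flightPos (ξ i) (U i) (n + 1) ω) (flightPos (ξ j) (U j) k ω) < ε}
      ≤ μ {ω | flightTheta (ξ j) k ω ∈ A} * flightConcBound ε n := by
  have := h.isProbabilityMeasure
  have hjk := (measurable_flightSigma_flightTheta (ξ := ξ) (U := U) (j := j) (k := k)
    subset_rfl).prodMk (measurable_flightSigma_flightPos subset_rfl)
  have hind := h.indepFun hjk (measurable_flightSigma_flightPos (j := i) (k := n + 1) subset_rfl)
    (disjoint_flightIndices_of_ne hij.symm _ _)
  exact measure_inter_prodMk_mem_le_of_indepFun (hjk.mono (h.flightSigma_le _) le_rfl)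
    (h.measurable_flightPos i _) hind (measurable_fst hA)
    (measurableSet_lt (f := fun p : (ℝ × EuclideanSpace ℝ (Fin 3)) × EuclideanSpace ℝ (Fin 3) ↦
      dist p.2 p.1.2) (by fun_prop) measurable_const)
    fun y ↦ h.measure_flightPos_mem_ball_le i hn y.2 hε

lemma measure_dist_flightPos_lt_le_right (h : IsFlightFamily μ σ v ξ U) {i j : ι} (hij : i ≠ j)
    (m : ℕ) {n : ℕ} (hn : 1 ≤ n) {ε : ℝ} (hε : 0 < ε) :
    μ {ω | dist (flightPos (ξ i) (U i) m ω) (flightPos (ξ j) (U j) (n + 1) ω) < ε}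
      ≤ flightConcBound ε n := by
  have := h.isProbabilityMeasure
  simpa [dist_comm] using h.measure_dist_flightPos_lt_le hij.symm m hn .univ hε

lemma measure_dist_flightPos_one_lt_le (h : IsFlightFamily μ σ v ξ U) {i j : ι} (hij : i ≠ j)
    {w : ℝ} (hw : 0 < w) (hwle : w ≤ 2 * arcsin √((1 - ⟪v i, v j⟫_ℝ) / 2)) {ε : ℝ} (hε : 0 < ε) :
    μ {ω | dist (flightPos (ξ i) (U i) 1 ω) (flightPos (ξ j) (U j) 1 ω) < ε}
      ≤ ENNReal.ofReal (4 * π * ε ^ 2 / w) := by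
  have hexp : expMeasure 1 ≤ volume := by simpa using expMeasure_le_smul_volume one_pos
  have hpos : ∀ᵐ x ∂expMeasure 1, 0 ≤ x := (expMeasure_ae_pos one_pos).mono fun _ ↦ le_of_lt
  have := isProbabilityMeasure_expMeasure one_pos
  calc μ {ω | dist (flightPos (ξ i) (U i) 1 ω) (flightPos (ξ j) (U j) 1 ω) < ε}
      = μ.map (fun ω ↦ (ξ i 0 ω, ξ j 0 ω)) {p | ‖p.1 • v i - p.2 • v j‖ < ε} := by
        rw [Measure.map_apply ((h.measurable_length i 0).prodMk (h.measurable_length j 0))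
          (measurableSet_lt (by fun_prop) measurable_const)]
        simp [flightPos, h.velocity_zero, dist_eq_norm]
    _ ≤ ENNReal.ofReal (4 * π * ε ^ 2 / w) := by
        rw [h.map_length_prodMk_length (by simpa using hij)]
        exact prod_norm_smul_sub_smul_lt_le hexp hexp hpos hpos (h.norm_eq_one i)
          (h.norm_eq_one j) hε hw hwle

lemma tsum_measure_flightTheta_le (h : IsFlightFamily μ σ v ξ U) (j : ι) {T : ℝ} (hT : 1 ≤ T) :
    ∑' k, μ {ω | flightTheta (ξ j) k ω ≤ T} ≤ ENNReal.ofReal (2 * exp 1 * T) :=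
  have := h.isProbabilityMeasure
  tsum_measure_flightTheta_le_le (h.measurable_length j) (h.iIndepFun_length j) (h.map_length j) hT

lemma measure_mem_thickening_later_flightSegment_le (h : IsFlightFamily μ σ v ξ U) (j : ι)
    (k n : ℕ) (T : ℝ) {ρ : ℝ} (hρ : 0 < ρ) (hρ2 : ρ ≤ 2) :
    μ {ω | flightTheta (ξ j) k ω ≤ T ∧ flightPos (ξ j) (U j) k ω ∈
        Metric.thickening ρ (flightSegment (ξ j) (U j) (k + 1 + n) ω)}
      ≤ ENNReal.ofReal (4 / ρ) *
        (μ {ω | flightTheta (ξ j) k ω ≤ T} * flightConcBound (2 * ρ) (n + 1)) := by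
  refine (h.measure_mem_thickening_flightSegment_le (fun _ ↦ by omega) T hρ hρ2).trans
    (mul_le_mul_right ?_ _)
  simp only [dist_comm _ (flightPos (ξ j) (U j) k _), add_assoc (k + 1) n 1]
  exact h.measure_dist_flightPos_self_lt_le j k n.succ_pos T (by positivity)

lemma measure_mem_thickening_earlier_flightSegment_le (h : IsFlightFamily μ σ v ξ U) (j : ι)
    (m n : ℕ) (T : ℝ) {ρ : ℝ} (hρ : 0 < ρ) (hρ2 : ρ ≤ 2) :
    μ {ω | flightTheta (ξ j) m ω ≤ T ∧ flightPos (ξ j) (U j) (m + 1 + (n + 1)) ω ∈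
        Metric.thickening ρ (flightSegment (ξ j) (U j) m ω)}
      ≤ ENNReal.ofReal (4 / ρ) *
        (μ {ω | flightTheta (ξ j) m ω ≤ T} * flightConcBound (2 * ρ) (n + 1)) :=
  (h.measure_mem_thickening_flightSegment_le_of_lt j (by omega) T hρ hρ2).trans
    (mul_le_mul_right (h.measure_dist_flightPos_self_lt_le j m n.succ_pos T (by positivity)) _)

lemma tsum_tsum_measure_flightTheta_mul_flightConcBound_le (h : IsFlightFamily μ σ v ξ U) (j : ι)
    {T : ℝ} (hT : 1 ≤ T) {ρ : ℝ} (hρ : 0 < ρ) (hρ2 : ρ ≤ 2) :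
    ∑' k, ∑' n, ENNReal.ofReal (4 / ρ) *
        (μ {ω | flightTheta (ξ j) k ω ≤ T} * flightConcBound (2 * ρ) (n + 1))
      ≤ ENNReal.ofReal (32 * flightConcConst * exp 1 * (ρ * T)) := by
  have hK := flightConcConst_pos
  simp only [ENNReal.tsum_mul_left]
  rw [ENNReal.tsum_mul_right]
  calc _ ≤ ENNReal.ofReal (4 / ρ) * (ENNReal.ofReal (2 * exp 1 * T) *
        ENNReal.ofReal (flightConcConst * (2 * ρ) ^ 2)) := by
        gcongr
        · exact h.tsum_measure_flightTheta_le j hT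
        · exact tsum_flightConcBound_succ_le (by positivity) (by linarith)
    _ = _ := by
        rw [← ENNReal.ofReal_mul (by positivity), ← ENNReal.ofReal_mul (by positivity)]
        congr 1
        field_simp
        ring

lemma measure_selfInterference_le (h : IsFlightFamily μ σ v ξ U) (j : ι) {T : ℝ} (hT : 1 ≤ T)
    {ρ : ℝ} (hρ : 0 < ρ) (hρ2 : ρ ≤ 2) :
    μ (selfInterference (ξ j) (U j) ρ T)
      ≤ ENNReal.ofReal (64 * flightConcConst * exp 1 * (ρ * T)) := by
  have hK := flightConcConst_pos
  have hsum := h.tsum_tsum_measure_flightTheta_mul_flightConcBound_le j hT hρ hρ2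
  have hlater := (ENNReal.tsum_le_tsum fun k ↦ ENNReal.tsum_le_tsum fun n ↦
    h.measure_mem_thickening_later_flightSegment_le j k n T hρ hρ2).trans hsum
  have hearlier := (ENNReal.tsum_le_tsum fun m ↦ ENNReal.tsum_le_tsum fun n ↦
    h.measure_mem_thickening_earlier_flightSegment_le j m n T hρ hρ2).trans hsum
  calc μ (selfInterference (ξ j) (U j) ρ T)
      ≤ ENNReal.ofReal (32 * flightConcConst * exp 1 * (ρ * T)) +
          ENNReal.ofReal (32 * flightConcConst * exp 1 * (ρ * T)) :=
        (measure_mono (selfInterference_subset _ _ _ _)).trans <| (measure_union_le _ _).trans <|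
          add_le_add ((measure_iUnion_iUnion_le_tsum _ _).trans hlater)
            ((measure_iUnion_iUnion_le_tsum _ _).trans hearlier)
    _ = _ := by
        rw [← ENNReal.ofReal_add (by positivity) (by positivity)]
        congr 1
        ring

lemma tsum_tsum_measure_dist_flightPos_lt_le (h : IsFlightFamily μ σ v ξ U) {i j : ι} (hij : i ≠ j)
    {w : ℝ} (hw : 0 < w) (hwle : w ≤ 2 * arcsin √((1 - ⟪v i, v j⟫_ℝ) / 2)) {T : ℝ} (hT : 1 ≤ T)
    {ε : ℝ} (hε : 0 < ε) (hε4 : ε ≤ 4) :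
    ∑' m, ∑' k, μ {ω | flightTheta (ξ j) (k + 1) ω ≤ T ∧
        dist (flightPos (ξ i) (U i) (m + 1) ω) (flightPos (ξ j) (U j) (k + 1) ω) < ε}
      ≤ ENNReal.ofReal (4 * π * ε ^ 2 / w + 5 * (flightConcConst * ε ^ 2) +
        flightConcConst * ε ^ 3 * (2 * exp 1 * T)) := by
  have := h.isProbabilityMeasure
  have hK := flightConcConst_pos
  refine (tsum_tsum_le_of_le_mul (b := fun n ↦ flightConcBound ε (n + 1))
    (p := fun k ↦ μ {ω | flightTheta (ξ j) (k + 1) ω ≤ T}) (fun _ ↦ prob_le_one)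
    ((measure_mono fun _ hω ↦ hω.2).trans (h.measure_dist_flightPos_one_lt_le hij hw hwle hε))
    (fun n k ↦ h.measure_dist_flightPos_lt_le hij (k + 1) n.succ_pos measurableSet_Iic hε)
    (fun m n ↦ (measure_mono fun _ hω ↦ hω.2).trans
      (h.measure_dist_flightPos_lt_le_right hij (m + 1) n.succ_pos hε)) 3).trans ?_
  have hshift : ∑' k, μ {ω | flightTheta (ξ j) (k + 1) ω ≤ T} ≤ ENNReal.ofReal (2 * exp 1 * T) :=
    (ENNReal.tsum_comp_le_tsum_of_injective (add_left_injective 1) _).trans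
      (h.tsum_measure_flightTheta_le j hT)
  rw [ENNReal.ofReal_add (by positivity) (by positivity),
    ENNReal.ofReal_add (by positivity) (by positivity), ENNReal.ofReal_mul (by positivity),
    ENNReal.ofReal_mul (p := flightConcConst * ε ^ 3) (by positivity)]
  gcongr
  · norm_num
  · exact tsum_flightConcBound_succ_le hε.le hε4
  · exact tsum_flightConcBound_add_four_le hε.le

lemma measure_pairInterference_le (h : IsFlightFamily μ σ v ξ U) {i j : ι} (hij : i ≠ j) {w : ℝ}
    (hw : 0 < w) (hwle : w ≤ 2 * arcsin √((1 - ⟪v i, v j⟫_ℝ) / 2)) {T : ℝ} (hT : 1 ≤ T)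
    {ρ : ℝ} (hρ : 0 < ρ) (hρ2 : ρ ≤ 2) (hρT : ρ * T ≤ 2) :
    μ (pairInterference (ξ i) (U i) (ξ j) (U j) ρ T) ≤ ENNReal.ofReal
      (π * (64 + 80 * flightConcConst + 128 * flightConcConst * exp 1) * (ρ * w⁻¹)) := by
  have hK := flightConcConst_pos
  have hsubset : pairInterference (ξ i) (U i) (ξ j) (U j) ρ T ⊆
      ⋃ m, ⋃ k, {ω | flightTheta (ξ j) (k + 1) ω ≤ T ∧ flightPos (ξ j) (U j) (k + 1) ω ∈
        Metric.thickening ρ (flightSegment (ξ i) (U i) m ω)} :=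
    fun ω ⟨m, k, hω⟩ ↦ Set.mem_iUnion₂.2 ⟨m, k, hω⟩
  have hπw : 1 ≤ π * w⁻¹ := by
    rw [← div_eq_mul_inv, one_le_div hw]
    linarith [arcsin_le_pi_div_two √((1 - ⟪v i, v j⟫_ℝ) / 2)]
  have hrest : ρ * (80 * flightConcConst + 64 * flightConcConst * exp 1 * (ρ * T)) ≤
      ρ * (80 * flightConcConst + 64 * flightConcConst * exp 1 * 2) * (π * w⁻¹) :=
    (by gcongr : _ ≤ _).trans (le_mul_of_one_le_right (by positivity) hπw)
  calc μ (pairInterference (ξ i) (U i) (ξ j) (U j) ρ T)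
      ≤ ∑' m, ∑' k, ENNReal.ofReal (4 / ρ) * μ {ω | flightTheta (ξ j) (k + 1) ω ≤ T ∧
          dist (flightPos (ξ i) (U i) (m + 1) ω) (flightPos (ξ j) (U j) (k + 1) ω) < 2 * ρ} := by
        refine (measure_mono hsubset).trans ((measure_iUnion_iUnion_le_tsum _ _).trans ?_)
        gcongr with m k
        exact h.measure_mem_thickening_flightSegment_le (fun hij' ↦ absurd hij' hij) T hρ hρ2
    _ ≤ ENNReal.ofReal (4 / ρ) * ENNReal.ofReal (4 * π * (2 * ρ) ^ 2 / w +
          5 * (flightConcConst * (2 * ρ) ^ 2) +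
          flightConcConst * (2 * ρ) ^ 3 * (2 * exp 1 * T)) := by
        simp only [ENNReal.tsum_mul_left]
        gcongr
        exact h.tsum_tsum_measure_dist_flightPos_lt_le hij hw hwle hT (by positivity) (by linarith)
    _ = ENNReal.ofReal (64 * ρ * (π * w⁻¹) +
          ρ * (80 * flightConcConst + 64 * flightConcConst * exp 1 * (ρ * T))) := by
        rw [← ENNReal.ofReal_mul (by positivity)]
        congr 1
        field_simp
        ring
    _ ≤ ENNReal.ofReal (64 * ρ * (π * w⁻¹) +
          ρ * (80 * flightConcConst + 64 * flightConcConst * exp 1 * 2) * (π * w⁻¹)) :=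
        ENNReal.ofReal_le_ofReal (add_le_add_right hrest _)
    _ = _ := by
        congr 1
        ring

end IsFlightFamily

section Trajectory

variable {Ω E : Type*} [NormedAddCommGroup E] [NormedSpace ℝ E] {ξ : ℕ → Ω → ℝ} {U : ℕ → Ω → E}
  {ω : Ω}

lemma flightTheta_succ (ξ : ℕ → Ω → ℝ) (k : ℕ) (ω : Ω) :
    flightTheta ξ (k + 1) ω = flightTheta ξ k ω + ξ k ω :=
  Finset.sum_range_succ _ _

lemma strictMono_flightTheta (hξ : ∀ k, 0 < ξ k ω) : StrictMono fun k ↦ flightTheta ξ k ω :=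
  strictMono_nat_of_lt_succ fun k ↦ by
    rw [flightTheta_succ]
    exact lt_add_of_pos_right _ (hξ k)

lemma exists_flightTheta_le_lt {s : ℝ} (hs : 0 ≤ s) (h : ∃ k, s < flightTheta ξ k ω) :
    ∃ m, flightTheta ξ m ω ≤ s ∧ s < flightTheta ξ (m + 1) ω := by
  classical
  have hne : Nat.find h ≠ 0 := fun hzero ↦
    (Nat.find_eq_zero h).1 hzero |>.not_ge (by simpa [flightTheta] using hs)
  obtain ⟨m, hm⟩ := Nat.exists_eq_succ_of_ne_zero hne
  have hsm := Nat.find_spec h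
  rw [hm] at hsm
  exact ⟨m, not_lt.1 (Nat.find_min h (hm ▸ m.lt_succ_self)), hsm⟩

lemma flightTraj_eq (hξ : ∀ k, 0 < ξ k ω) {m : ℕ} {s : ℝ} (hms : flightTheta ξ m ω ≤ s)
    (hsm : s < flightTheta ξ (m + 1) ω) :
    flightTraj ξ U s ω = flightPos ξ U m ω + (s - flightTheta ξ m ω) • U m ω := by
  have hmono := strictMono_flightTheta hξ
  have hIic : {k | flightTheta ξ k ω ≤ s} = Set.Iic m := Set.ext fun k ↦
    ⟨fun hk ↦ Nat.lt_succ_iff.1 (hmono.lt_iff_lt.1 (hk.trans_lt hsm)),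
      fun hk ↦ (hmono.monotone hk).trans hms⟩
  rw [flightTraj, hIic, csSup_Iic]

lemma flightTraj_mem_flightSegment (hξ : ∀ k, 0 < ξ k ω) {m : ℕ} {s : ℝ}
    (hms : flightTheta ξ m ω ≤ s) (hsm : s < flightTheta ξ (m + 1) ω) :
    flightTraj ξ U s ω ∈ flightSegment ξ U m ω := by
  rw [flightSegment, segment_eq_image', flightTraj_eq hξ hms hsm]
  rw [flightTheta_succ] at hsm
  refine ⟨(s - flightTheta ξ m ω) / ξ m ω, ⟨div_nonneg (sub_nonneg.2 hms) (hξ m).le,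
    (div_le_one (hξ m)).2 (by linarith)⟩, ?_⟩
  simp only [flightPos_succ, add_sub_cancel_left, smul_smul, div_mul_cancel₀ _ (hξ m).ne']

end Trajectory

section Mismatch

variable {Ω E ι : Type*} [NormedAddCommGroup E] [NormedSpace ℝ E] {ξ : ι → ℕ → Ω → ℝ}
  {U : ι → ℕ → Ω → E} {r : ℝ} {ω : Ω}

/-- The times by which a mismatch has occurred: `mismatchTime` is the infimum of this set. -/
def mismatchSet (ξ : ι → ℕ → Ω → ℝ) (U : ι → ℕ → Ω → E) (r : ℝ) (ω : Ω) : Set ℝ :=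
  {t : ℝ | 0 < t ∧ ∃ i j : ι, ∃ k : ℕ, 1 ≤ k ∧
    flightTheta (ξ j) k ω ≤ t ∧
    ∃ s : ℝ, 0 ≤ s ∧ s ≤ t ∧
      ‖flightTraj (ξ i) (U i) s ω - flightPos (ξ j) (U j) k ω‖ < 2 * r ∧
      (i = j → (s < flightTheta (ξ j) (k - 1) ω ∨ flightTheta (ξ j) (k + 1) ω < s))}

/- A flight shorter than `2 * r` ends within distance `2 * r` of the scattering point it started
from, and the process stays that close to it for a short while after the next scattering. -/
lemma mismatchSet_nonempty {j : ι} (hξ : ∀ k, 0 < ξ j k ω) (hU : ∀ k, ‖U j k ω‖ = 1)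
    (hshort : ∃ k, ξ j (k + 1) ω < 2 * r) : (mismatchSet ξ U r ω).Nonempty := by
  obtain ⟨k, hk⟩ := hshort
  obtain ⟨δ, hδ0, hδ⟩ := exists_between (lt_min (hξ (k + 2)) (sub_pos.2 hk))
  obtain ⟨hδξ, hδr⟩ := lt_min_iff.1 hδ
  have hmono := strictMono_flightTheta hξ
  have hzero : 0 ≤ flightTheta (ξ j) (k + 2) ω := Finset.sum_nonneg fun l _ ↦ (hξ l).le
  have hle : flightTheta (ξ j) (k + 1) ω ≤ flightTheta (ξ j) (k + 2) ω :=
    hmono.monotone (Nat.le_succ _)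
  refine ⟨flightTheta (ξ j) (k + 2) ω + δ, by positivity, j, j, k + 1, by omega,
    hle.trans (le_add_of_nonneg_right hδ0.le), _, by positivity, le_rfl, ?_,
    fun _ ↦ .inr (lt_add_of_pos_right _ hδ0)⟩
  rw [flightTraj_eq hξ (m := k + 2) (le_add_of_nonneg_right hδ0.le)
    (by rw [flightTheta_succ (ξ j) (k + 2)]; gcongr), flightPos_succ _ _ (k + 1),
    add_sub_cancel_left, add_assoc, add_sub_cancel_left]
  calc ‖ξ j (k + 1) ω • U j (k + 1) ω + δ • U j (k + 2) ω‖
      ≤ ‖ξ j (k + 1) ω • U j (k + 1) ω‖ + ‖δ • U j (k + 2) ω‖ := norm_add_le _ _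
    _ = ξ j (k + 1) ω + δ := by
        rw [norm_smul, norm_smul, hU, hU, norm_of_nonneg (hξ _).le, norm_of_nonneg hδ0.le,
          mul_one, mul_one]
    _ < 2 * r := by linarith

lemma mem_interference_of_mem_mismatchSet (hξ : ∀ j k, 0 < ξ j k ω)
    (hdiv : ∀ j t, ∃ k, t < flightTheta (ξ j) k ω) {t T : ℝ} (ht : t ∈ mismatchSet ξ U r ω)
    (htT : t ≤ T) :
    (∃ j, ω ∈ selfInterference (ξ j) (U j) (2 * r) T) ∨
      ∃ i j, i ≠ j ∧ ω ∈ pairInterference (ξ i) (U i) (ξ j) (U j) (2 * r) T := by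
  obtain ⟨-, i, j, k, hk, hkt, s, hs, -, hdist, hadj⟩ := ht
  obtain ⟨m, hms, hsm⟩ := exists_flightTheta_le_lt hs (hdiv i s)
  have hmono := strictMono_flightTheta (hξ i)
  have hclose : flightPos (ξ j) (U j) k ω ∈
      Metric.thickening (2 * r) (flightSegment (ξ i) (U i) m ω) :=
    Metric.mem_thickening_iff.2 ⟨_, flightTraj_mem_flightSegment (hξ i) hms hsm,
      by rwa [dist_comm, dist_eq_norm]⟩
  rcases eq_or_ne i j with rfl | hij
  · refine .inl ⟨i, k, m, ?_, ?_, hclose⟩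
    · rcases hadj rfl with hlt | hlt
      · have : m < k - 1 := hmono.lt_iff_lt.1 (hms.trans_lt hlt)
        omega
      · have : k + 1 < m + 1 := hmono.lt_iff_lt.1 (hlt.trans hsm)
        omega
    · exact (hmono.monotone (min_le_left k m)).trans (hkt.trans htT)
  · obtain ⟨l, rfl⟩ := Nat.exists_eq_add_of_le' hk
    exact .inr ⟨i, j, hij, m, l, hkt.trans htT, hclose⟩

end Mismatch

namespace IsFlightFamily

variable {Ω E : Type*} [MeasurableSpace Ω] [NormedAddCommGroup E] [NormedSpace ℝ E]
  [MeasurableSpace E] {μ : Measure Ω} {σ : Measure E} {N : ℕ} {v : Fin N → E}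
  {ξ : Fin N → ℕ → Ω → ℝ} {U : Fin N → ℕ → Ω → E}

lemma ae_length_pos (h : IsFlightFamily μ σ v ξ U) : ∀ᵐ ω ∂μ, ∀ j k, 0 < ξ j k ω := by
  refine ae_all_iff.2 fun j ↦ ae_all_iff.2 fun k ↦ ?_
  have hpos := expMeasure_ae_pos one_pos
  rw [← h.map_length j k] at hpos
  exact ae_of_ae_map (h.measurable_length j k).aemeasurable hpos

lemma ae_mem_interference (h : IsFlightFamily μ σ v ξ U) (j : Fin N) {r : ℝ} (hr : 0 < r)
    (T : ℝ) :
    ∀ᵐ ω ∂μ, mismatchTime N ξ U r ω < T →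
      (∃ j, ω ∈ selfInterference (ξ j) (U j) (2 * r) T) ∨
        ∃ i j, i ≠ j ∧ ω ∈ pairInterference (ξ i) (U i) (ξ j) (U j) (2 * r) T := by
  have := h.isProbabilityMeasure
  have hshort : ∀ᵐ ω ∂μ, ∃ k, ξ j (k + 1) ω < 2 * r :=
    ae_exists_lt (fun k ↦ h.measurable_length j (k + 1))
      ((h.iIndepFun_length j).precomp (add_left_injective 1)) (fun k ↦ h.map_length j (k + 1))
      (by positivity)
  have hdiv : ∀ᵐ ω ∂μ, ∀ j t, ∃ k, t < flightTheta (ξ j) k ω := ae_all_iff.2 fun j ↦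
    ae_forall_exists_lt_flightTheta (h.measurable_length j) (h.iIndepFun_length j) (h.map_length j)
  filter_upwards [h.ae_length_pos, ae_all_iff.2 (h.ae_norm_velocity j), hdiv, hshort]
    with ω hξ hU hdiv hshort hlt
  obtain ⟨t, ht, htT⟩ := exists_lt_of_csInf_lt (mismatchSet_nonempty (hξ j) hU hshort) hlt
  exact mem_interference_of_mem_mismatchSet hξ hdiv ht htT.le

lemma measure_mismatchTime_lt_le_of_interference_le (h : IsFlightFamily μ σ v ξ U) {r : ℝ}
    (hr : 0 < r) {T : ℝ} {a b : ℝ≥0∞}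
    (hself : ∀ j, μ (selfInterference (ξ j) (U j) (2 * r) T) ≤ a)
    (hpair : ∀ i j, i ≠ j → μ (pairInterference (ξ i) (U i) (ξ j) (U j) (2 * r) T) ≤ b)
    (hN : 0 < N) :
    μ {ω | mismatchTime N ξ U r ω < T} ≤ N * a + N ^ 2 * b := by
  calc μ {ω | mismatchTime N ξ U r ω < T}
      ≤ μ ((⋃ j, selfInterference (ξ j) (U j) (2 * r) T) ∪
          ⋃ i, ⋃ j, {ω | i ≠ j ∧ ω ∈ pairInterference (ξ i) (U i) (ξ j) (U j) (2 * r) T}) := by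
        refine measure_mono_ae ((h.ae_mem_interference ⟨0, hN⟩ hr T).mono fun ω hω hlt ↦ ?_)
        exact (hω hlt).imp Set.mem_iUnion.2 Set.mem_iUnion₂.2
    _ ≤ ∑ _j : Fin N, a + ∑ _i : Fin N, ∑ _j : Fin N, b := by
        refine (measure_union_le _ _).trans (add_le_add ((measure_iUnion_fintype_le _ _).trans
          (Finset.sum_le_sum fun j _ ↦ hself j)) ((measure_iUnion_fintype_le _ _).trans
          (Finset.sum_le_sum fun i _ ↦ (measure_iUnion_fintype_le _ _).trans
            (Finset.sum_le_sum fun j _ ↦ ?_))))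
        rcases eq_or_ne i j with hij | hij
        · simp [hij]
        · exact (measure_mono fun _ hω ↦ hω.2).trans (hpair i j hij)
    _ = _ := by simp [← mul_assoc, sq]

end IsFlightFamily

lemma le_of_eq_sInf_angle {E : Type*} [NormedAddCommGroup E] [InnerProductSpace ℝ E] {ι : Type*}
    [LinearOrder ι] {v : ι → E} {w : ℝ} (hw : w = sInf {x : ℝ | ∃ i j : ι, i < j ∧
      x = 2 * arcsin (√((1 - ⟪v i, v j⟫_ℝ) / 2))}) {i j : ι} (hij : i ≠ j) :
    w ≤ 2 * arcsin √((1 - ⟪v i, v j⟫_ℝ) / 2) := by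
  wlog hlt : i < j generalizing i j
  · rw [real_inner_comm]
    exact this hij.symm (hij.lt_or_gt.resolve_left hlt)
  rw [hw]
  refine csInf_le ⟨0, ?_⟩ ⟨i, j, hlt, rfl⟩
  rintro x ⟨i, j, -, rfl⟩
  exact mul_nonneg zero_le_two (arcsin_nonneg.2 (sqrt_nonneg _))

/-- The constant in the bound for the probability that a mismatch occurs before time `T`. -/
noncomputable def mismatchConst : ℝ :=
  128 * flightConcConst * exp 1 + π * (128 + 160 * flightConcConst + 256 * flightConcConst * exp 1)

lemma mismatchConst_pos : 0 < mismatchConst := by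
  have hK := flightConcConst_pos
  unfold mismatchConst
  positivity

lemma IsFlightFamily.measure_mismatchTime_lt_le {Ω : Type*} [MeasurableSpace Ω]
    {μ : Measure Ω} {σ : Measure (EuclideanSpace ℝ (Fin 3))} {N : ℕ}
    {v : Fin N → EuclideanSpace ℝ (Fin 3)} {ξ : Fin N → ℕ → Ω → ℝ}
    {U : Fin N → ℕ → Ω → EuclideanSpace ℝ (Fin 3)} (h : IsFlightFamily μ σ v ξ U) (hN : 0 < N)
    {w : ℝ} (hw : 0 < w) (hwle : ∀ i j, i ≠ j → w ≤ 2 * arcsin √((1 - ⟪v i, v j⟫_ℝ) / 2))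
    {r T : ℝ} (hr : 0 < r) (hr1 : r ≤ 1) (hT : 1 ≤ T) (hrT : r * T ≤ 1) :
    μ {ω | mismatchTime N ξ U r ω < T} ≤
      ENNReal.ofReal (mismatchConst * r * (N * T + N ^ 2 * w⁻¹)) := by
  have hK := flightConcConst_pos
  have hself (j : Fin N) :=
    h.measure_selfInterference_le j hT (ρ := 2 * r) (by positivity) (by linarith)
  have hpair (i j : Fin N) (hij : i ≠ j) := h.measure_pairInterference_le hij hw (hwle i j hij) hT
    (ρ := 2 * r) (by positivity) (by linarith) (by linarith)
  refine (h.measure_mismatchTime_lt_le_of_interference_le hr hself hpair hN).trans ?_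
  rw [← ENNReal.ofReal_natCast, ← ENNReal.ofReal_pow (by positivity),
    ← ENNReal.ofReal_mul (by positivity), ← ENNReal.ofReal_mul (by positivity),
    ← ENNReal.ofReal_add (by positivity) (by positivity)]
  refine ENNReal.ofReal_le_ofReal ?_
  have hcross : 0 ≤ 128 * flightConcConst * exp 1 * r * (N ^ 2 * w⁻¹) +
      π * (128 + 160 * flightConcConst + 256 * flightConcConst * exp 1) * r * (N * T) := by
    positivity
  rw [mismatchConst]
  linarith

/-- Proposition 1 of the paper (`d = 3`): for `N` independent Markovian flight processes with
deterministic initial unit velocities of minimal pairwise angle `w`, and `r ∈ (0,1]`,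
`T ≥ 1` with `rT ≤ 1`, the first interference time `σ` satisfies
`ℙ(σ < T) ≤ C r (N T + N² w⁻¹)` for a universal constant `C`. -/
theorem stmt16 :
    ∃ C : ℝ, 0 < C ∧
      ∀ (Ω : Type) (_ : MeasureSpace Ω) (_ : IsProbabilityMeasure (ℙ : Measure Ω))
        (μS : Measure (EuclideanSpace ℝ (Fin 3)))
        (_ : IsProbabilityMeasure μS)
        (_ : μS (Metric.sphere (0 : EuclideanSpace ℝ (Fin 3)) 1)ᶜ = 0)
        (_ : ∀ R : EuclideanSpace ℝ (Fin 3) ≃ₗᵢ[ℝ] EuclideanSpace ℝ (Fin 3),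
              μS.map R = μS)
        (N : ℕ) (_ : 2 ≤ N)
        (v : Fin N → EuclideanSpace ℝ (Fin 3)) (_ : ∀ j, ‖v j‖ = 1)
        (ξ : Fin N → ℕ → Ω → ℝ) (U : Fin N → ℕ → Ω → EuclideanSpace ℝ (Fin 3))
        (_ : ∀ j k, Measurable (ξ j k)) (_ : ∀ j k, Measurable (U j k))
        (_ : ∀ j, U j 0 = fun _ => v j)
        (_ : iIndepFun
          (m := fun i : (Fin N × ℕ) ⊕ (Fin N × ℕ) => Sum.rec
            (motive := fun i => MeasurableSpace
              (Sum.rec (motive := fun _ => Type) (fun _ => ℝ)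
                (fun _ => EuclideanSpace ℝ (Fin 3)) i))
            (fun _ => inferInstance) (fun _ => inferInstance) i)
          (fun i => Sum.rec
            (motive := fun i => Ω → Sum.rec (motive := fun _ => Type) (fun _ => ℝ)
              (fun _ => EuclideanSpace ℝ (Fin 3)) i)
            (fun p => ξ p.1 p.2) (fun p => U p.1 p.2) i) ℙ)
        (_ : ∀ j k, ∀ t : ℝ, 0 ≤ t →
          ℙ {ω | ξ j k ω ≤ t} = ENNReal.ofReal (1 - Real.exp (-t)))
        (_ : ∀ j, ∀ k : ℕ, 1 ≤ k → Measure.map (U j k) ℙ = μS)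
        (w : ℝ) (_ : 0 < w)
        (_ : w = sInf {x : ℝ | ∃ i j : Fin N, i < j ∧
              x = 2 * arcsin (√((1 - ⟪v i, v j⟫_ℝ) / 2))})
        (r T : ℝ), r ∈ Set.Ioc (0:ℝ) 1 → 1 ≤ T → r * T ≤ 1 →
          ℙ {ω | mismatchTime N ξ U r ω < T}
            ≤ ENNReal.ofReal (C * r * (N * T + N ^ 2 * w⁻¹)) := by
  refine ⟨mismatchConst, mismatchConst_pos, ?_⟩
  intro Ω _ hℙ σ hσ hsphere hrot N hN v hv ξ U hξ hU hU0 hind hlength hvelocity w hw hwinf r T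
    ⟨hr, hr1⟩ hT hrT
  have hunif : IsUniformOnSphere σ :=
    ⟨hσ, (measure_eq_zero_iff_ae_notMem.1 hsphere).mono fun u hu ↦ by simpa using hu, hrot⟩
  have hindep : iIndep (flightComap ξ U) ℙ := by
    convert (iIndepFun_iff_iIndep _ _ _).1 hind using 1
    ext1 (p | p) <;> rfl
  have hexp (j : Fin N) (k : ℕ) : Measure.map (ξ j k) ℙ = expMeasure 1 :=
    map_eq_expMeasure_of_measure_le one_pos (hξ j k) (by simpa using hlength j k)
  have h : IsFlightFamily ℙ σ v ξ U := ⟨hℙ, hunif, hv, hξ, hU, hU0, hindep, hexp, hvelocity⟩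
  exact h.measure_mismatchTime_lt_le (by omega) hw
    (fun _ _ ↦ le_of_eq_sInf_angle hwinf) hr hr1 hT hrT
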